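/- arXiv:1104.4820 — 7 statements merged into one kernel-verified Lean document; each statement's English description precedes it below -/
import Mathlib

section
/- Let F ⊂ ℤ be a finite set and for each k ∈ F let P_k be a finite linear combination of operators T_{n,m} with m − n = k. Then for every j ∈ F one has ‖P_j‖ ≤ ‖Σ_{k∈F} P_k‖ (operator norms in B(H)). -/
/-- `T_{n,m} = Tⁿ (T*)ᵐ` for a bounded operator `T` on a complex Hilbert space. -/
noncomputable def Tnm {H : Type*} [NormedAddCommGroup H] [InnerProductSpace ℂ H]
    [CompleteSpace H] (T : H →L[ℂ] H) (n m : ℕ) : H →L[ℂ] H :=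
  T ^ n * (ContinuousLinearMap.adjoint T) ^ m

/-!
For `|ω| = 1`, conjugation by the diagonal unitary `e n ↦ ω ^ n • e n` is a `*`-automorphism of
`B(H)` sending the shift `T` to `ω • T`, hence acting on the span of the `T_{n,m}` with `m - n = k`
as multiplication by `ω ^ (-k)`. If `ω` is a root of unity of large order, these eigenvalues are
distinct for `k ∈ F`, so averaging the powers of the automorphism against a character of the cyclic
group they generate projects `∑ k ∈ F, P k` onto `P j`; the average has norm at most one.
-/

open scoped InnerProductSpace

section Averaging

theorem sum_range_pow_eq_zero_of_pow_eq_one {R : Type*} [Ring R] [NoZeroDivisors R] {z : R}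
    {N : ℕ} (hz : z ^ N = 1) (hz1 : z ≠ 1) : ∑ r ∈ Finset.range N, z ^ r = 0 := by
  have h : (∑ r ∈ Finset.range N, z ^ r) * (z - 1) = 0 := by rw [geom_sum_mul, hz, sub_self]
  exact (mul_eq_zero.mp h).resolve_right (sub_ne_zero.mpr hz1)

variable {ι 𝕜 E : Type*} {s : Finset ι} {c : ι → 𝕜} {x : ι → E} {j : ι} {N : ℕ}

theorem sum_range_inv_pow_smul_pow_apply_sum_eq_nsmul [Field 𝕜] [AddCommGroup E] [Module 𝕜 E]
    {φ : Module.End 𝕜 E} (hφ : ∀ k ∈ s, φ (x k) = c k • x k)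
    (hc : ∀ k ∈ s, c k ^ N = 1) (hj : j ∈ s) (hcj : ∀ k ∈ s, k ≠ j → c k ≠ c j) :
    ∑ r ∈ Finset.range N, (c j)⁻¹ ^ r • (φ ^ r) (∑ k ∈ s, x k) = N • x j := by
  rcases eq_or_ne N 0 with rfl | hN
  · simp
  have hcj0 : c j ≠ 0 := (IsUnit.of_pow_eq_one (hc j hj) hN).ne_zero
  have hpow (r : ℕ) : ∀ k ∈ s, (φ ^ r) (x k) = c k ^ r • x k := fun k hk => by
    induction r with
    | zero => simp
    | succ r ih => rw [pow_succ', Module.End.mul_apply, ih, map_smul, hφ k hk, smul_smul, pow_succ]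
  calc ∑ r ∈ Finset.range N, (c j)⁻¹ ^ r • (φ ^ r) (∑ k ∈ s, x k)
      = ∑ r ∈ Finset.range N, ∑ k ∈ s, ((c j)⁻¹ * c k) ^ r • x k :=
        Finset.sum_congr rfl fun r _ => by
          rw [map_sum, Finset.smul_sum]
          exact Finset.sum_congr rfl fun k hk => by rw [hpow r k hk, smul_smul, mul_pow]
    _ = ∑ k ∈ s, (∑ r ∈ Finset.range N, ((c j)⁻¹ * c k) ^ r) • x k := by
        simp only [Finset.sum_smul]
        exact Finset.sum_comm
    _ = (∑ r ∈ Finset.range N, ((c j)⁻¹ * c j) ^ r) • x j := by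
        refine Finset.sum_eq_single_of_mem j hj fun k hk hkj => ?_
        rw [sum_range_pow_eq_zero_of_pow_eq_one, zero_smul]
        · rw [mul_pow, inv_pow, hc j hj, hc k hk, inv_one, one_mul]
        · rw [Ne, inv_mul_eq_one₀ hcj0]
          exact (hcj k hk hkj).symm
    _ = N • x j := by
        simp only [inv_mul_cancel₀ hcj0, one_pow, Finset.sum_const, Finset.card_range,
          nsmul_one, Nat.cast_smul_eq_nsmul]

theorem norm_le_norm_sum_of_eigenvectors [RCLike 𝕜] [SeminormedAddCommGroup E] [NormedSpace 𝕜 E]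
    {φ : Module.End 𝕜 E} (hφ_le : ∀ y, ‖φ y‖ ≤ ‖y‖)
    (hφ : ∀ k ∈ s, φ (x k) = c k • x k) (hN : N ≠ 0) (hc : ∀ k ∈ s, c k ^ N = 1) (hj : j ∈ s)
    (hcj : ∀ k ∈ s, k ≠ j → c k ≠ c j) : ‖x j‖ ≤ ‖∑ k ∈ s, x k‖ := by
  have hcj_norm : ‖c j‖ = 1 := by
    rw [← pow_eq_one_iff_of_nonneg (norm_nonneg _) hN, ← norm_pow, hc j hj, norm_one]
  have hpow_le (r : ℕ) (y : E) : ‖(φ ^ r) y‖ ≤ ‖y‖ := by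
    induction r with
    | zero => simp
    | succ r ih =>
      rw [pow_succ', Module.End.mul_apply]
      exact (hφ_le _).trans ih
  refine le_of_mul_le_mul_left ?_ (Nat.cast_pos.mpr (Nat.pos_of_ne_zero hN) : (0 : ℝ) < N)
  calc (N : ℝ) * ‖x j‖
      = ‖∑ r ∈ Finset.range N, (c j)⁻¹ ^ r • (φ ^ r) (∑ k ∈ s, x k)‖ := by
        rw [sum_range_inv_pow_smul_pow_apply_sum_eq_nsmul hφ hc hj hcj,
          ← Nat.cast_smul_eq_nsmul 𝕜, norm_smul, RCLike.norm_natCast]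
    _ ≤ ∑ r ∈ Finset.range N, ‖(c j)⁻¹ ^ r • (φ ^ r) (∑ k ∈ s, x k)‖ := norm_sum_le _ _
    _ ≤ ∑ _r ∈ Finset.range N, ‖∑ k ∈ s, x k‖ := by
        refine Finset.sum_le_sum fun r _ => ?_
        rw [norm_smul, norm_pow, norm_inv, hcj_norm, inv_one, one_pow, one_mul]
        exact hpow_le r _
    _ = N * ‖∑ k ∈ s, x k‖ := by
        rw [Finset.sum_const, Finset.card_range, nsmul_eq_mul]

end Averaging

theorem exists_pow_eq_one_injOn_zpow (F : Finset ℤ) :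
    ∃ (N : ℕ) (ω : ℂ), N ≠ 0 ∧ ω ^ N = 1 ∧ Set.InjOn (fun k : ℤ => ω ^ k) F := by
  set M := F.sup Int.natAbs
  have hM : ∀ k ∈ F, k.natAbs ≤ M := fun k hk => Finset.le_sup hk
  have hω := Complex.isPrimitiveRoot_exp (2 * M + 1) (by omega)
  refine ⟨2 * M + 1, _, by omega, hω.pow_eq_one, fun k hk l hl hkl => ?_⟩
  have hdvd : ((2 * M + 1 : ℕ) : ℤ) ∣ k - l := by
    rw [← hω.zpow_eq_one_iff_dvd, zpow_sub₀ (hω.ne_zero (by omega))]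
    exact (div_eq_one_iff_eq (zpow_ne_zero _ (hω.ne_zero (by omega)))).mpr hkl
  have hlt : |k - l| < ((2 * M + 1 : ℕ) : ℤ) := by
    rw [abs_lt]
    have := hM k hk
    have := hM l hl
    omega
  exact sub_eq_zero.mp (Int.eq_zero_of_abs_lt_dvd hdvd hlt)

section GaugeSymmetry

/-- An element `t` of a `*`-algebra has gauge symmetry if every rotation `t ↦ ω • t`, `|ω| = 1`,
is induced by a `*`-endomorphism of the algebra; operators unitarily equivalent to all of their
rotations (*circular operators*) are examples. Neither a group law nor continuity in `ω` is asked
for. -/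
def HasGaugeSymmetry {A : Type*} [Semiring A] [StarRing A] [Algebra ℂ A] (t : A) : Prop :=
  ∀ ω : ℂ, ‖ω‖ = 1 → ∃ φ : A →⋆ₐ[ℂ] A, φ t = ω • t

/-- The linear combinations of the monomials `tⁿ (t*)ᵐ` with `m - n = k`. The sign convention makes
`t*`, not `t`, have degree `1`. -/
def gaugeComponent {A : Type*} [Semiring A] [StarRing A] [Algebra ℂ A] (t : A) (k : ℤ) :
    Submodule ℂ A :=
  Submodule.span ℂ {a | ∃ n m : ℕ, (m : ℤ) - n = k ∧ a = t ^ n * star t ^ m}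

theorem apply_eq_zpow_smul_of_mem_gaugeComponent {A : Type*} [Semiring A] [StarRing A]
    [Algebra ℂ A] [StarModule ℂ A] {t : A} {ω : ℂ} (hω : ‖ω‖ = 1) {φ : A →⋆ₐ[ℂ] A}
    (hφ : φ t = ω • t) {k : ℤ} {a : A} (ha : a ∈ gaugeComponent t k) :
    φ a = ω ^ (-k) • a := by
  have hω0 : ω ≠ 0 := norm_ne_zero_iff.mp (hω ▸ one_ne_zero)
  induction ha using Submodule.span_induction with
  | mem a ha =>
    obtain ⟨n, m, rfl, rfl⟩ := ha
    rw [map_mul, map_pow, map_pow, map_star, hφ, star_smul, smul_pow, smul_pow, smul_mul_smul_comm,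
      neg_sub, zpow_sub₀ hω0, zpow_natCast, zpow_natCast, div_eq_mul_inv, ← inv_pow,
      Complex.inv_eq_conj hω, Complex.star_def]
  | zero => rw [map_zero, smul_zero]
  | add a b _ _ ha hb => rw [map_add, ha, hb, smul_add]
  | smul z a _ ha => rw [map_smul, ha, smul_comm]

theorem norm_component_le_norm_sum_general {A : Type*} [CStarAlgebra A] {t : A}
    (ht : HasGaugeSymmetry t) (F : Finset ℤ) (P : ℤ → A) (hP : ∀ k ∈ F, P k ∈ gaugeComponent t k) :
    ∀ j ∈ F, ‖P j‖ ≤ ‖∑ k ∈ F, P k‖ := by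
  intro j hj
  obtain ⟨N, ω, hN, hω, hinj⟩ := exists_pow_eq_one_injOn_zpow F
  have hω_norm : ‖ω‖ = 1 := Complex.norm_eq_one_of_pow_eq_one hω hN
  obtain ⟨φ, hφ⟩ := ht ω hω_norm
  refine norm_le_norm_sum_of_eigenvectors (φ := φ.toAlgHom.toLinearMap) (c := fun k => ω ^ (-k))
    (NonUnitalStarAlgHom.norm_apply_le φ)
    (fun k hk => apply_eq_zpow_smul_of_mem_gaugeComponent hω_norm hφ (hP k hk)) hN
    (fun k _ => ?_) hj fun k hk hkj h => hinj.ne hk hj hkj ?_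
  · rw [← zpow_natCast, zpow_comm, zpow_natCast, hω, one_zpow]
  · simpa only [zpow_neg, inv_inj] using h

end GaugeSymmetry

section Hilbert

variable {ι 𝕜 H : Type*} [RCLike 𝕜] [NormedAddCommGroup H]

theorem eq_of_forall_inner_apply_eq [InnerProductSpace 𝕜 H] (e : HilbertBasis ι 𝕜 H)
    {S T : H →L[𝕜] H} (h : ∀ i j, ⟪e j, S (e i)⟫_𝕜 = ⟪e j, T (e i)⟫_𝕜) : S = T := by
  refine ContinuousLinearMap.ext_on
    (Submodule.dense_iff_topologicalClosure_eq_top.mpr e.dense_span) ?_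
  rintro _ ⟨i, rfl⟩
  refine e.repr.injective (lp.ext (funext fun j => ?_))
  rw [e.repr_apply_apply, e.repr_apply_apply, h]

variable [CompleteSpace H]

theorem exists_linearIsometryEquiv_apply_eq_smul [InnerProductSpace 𝕜 H] (e : HilbertBasis ι 𝕜 H)
    {z : ι → 𝕜} (hz : ∀ i, ‖z i‖ = 1) : ∃ U : H ≃ₗᵢ[𝕜] H, ∀ i, U (e i) = z i • e i := by
  classical
  have hz0 (i : ι) : z i ≠ 0 := norm_ne_zero_iff.mp (hz i ▸ one_ne_zero)
  have horth : Orthonormal 𝕜 fun i => z i • e i := by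
    refine ⟨fun i => by rw [norm_smul, hz, e.orthonormal.1, one_mul], fun i j hij => ?_⟩
    simp only [inner_smul_left, inner_smul_right, e.orthonormal.2 hij, mul_zero]
  have hspan : Submodule.span 𝕜 (Set.range e) ≤
      Submodule.span 𝕜 (Set.range fun i => z i • e i) := by
    rw [Submodule.span_le, Set.range_subset_iff]
    intro i
    exact (Submodule.smul_mem_iff _ (hz0 i)).mp (Submodule.subset_span ⟨i, rfl⟩)
  let f := HilbertBasis.mk horth (e.dense_span.ge.trans (Submodule.topologicalClosure_mono hspan))
  refine ⟨e.repr.trans f.repr.symm, fun i => ?_⟩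
  rw [LinearIsometryEquiv.trans_apply, e.repr_self, f.repr_symm_single, HilbertBasis.coe_mk]

theorem hasGaugeSymmetry_of_inner_eq_zero [InnerProductSpace ℂ H] (e : HilbertBasis ι ℂ H)
    {T : H →L[ℂ] H} (d : ι → ℤ) (hT : ∀ i j, d j ≠ d i + 1 → ⟪e j, T (e i)⟫_ℂ = 0) :
    HasGaugeSymmetry T := by
  intro ω hω
  have hω0 : ω ≠ 0 := norm_ne_zero_iff.mp (hω ▸ one_ne_zero)
  obtain ⟨U, hU⟩ := exists_linearIsometryEquiv_apply_eq_smul e (z := fun i => ω ^ d i)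
    fun i => by rw [norm_zpow, hω, one_zpow]
  have hU_symm (i : ι) : U.symm (e i) = ω ^ (-d i) • e i := by
    rw [LinearIsometryEquiv.symm_apply_eq, map_smul, hU, smul_smul, ← zpow_add₀ hω0,
      neg_add_cancel, zpow_zero, one_smul]
  have hconj : (starRingEnd ℂ) ω = ω⁻¹ := (Complex.inv_eq_conj hω).symm
  refine ⟨U.conjStarAlgEquiv.toStarAlgHom, eq_of_forall_inner_apply_eq e fun i j => ?_⟩
  calc ⟪e j, U (T (U.symm (e i)))⟫_ℂ
      = ⟪U.symm (e j), T (U.symm (e i))⟫_ℂ := by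
        rw [← U.symm.inner_map_map, U.symm_apply_apply]
    _ = ω ^ (d j - d i) * ⟪e j, T (e i)⟫_ℂ := by
        rw [hU_symm, hU_symm, map_smul, inner_smul_left, inner_smul_right, map_zpow₀, hconj,
          inv_zpow', neg_neg, ← mul_assoc, ← zpow_add₀ hω0, ← sub_eq_add_neg]
    _ = ω * ⟪e j, T (e i)⟫_ℂ := by
        by_cases hij : d j = d i + 1
        · rw [hij, add_sub_cancel_left, zpow_one]
        · rw [hT i j hij, mul_zero, mul_zero]
    _ = ⟪e j, (ω • T) (e i)⟫_ℂ := by rw [smul_apply, inner_smul_right]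

theorem hasGaugeSymmetry_of_apply_eq_succ [InnerProductSpace ℂ H] (e : HilbertBasis ℕ ℂ H)
    {T : H →L[ℂ] H} (hT : ∀ n, T (e n) = e (n + 1)) : HasGaugeSymmetry T := by
  refine hasGaugeSymmetry_of_inner_eq_zero e (fun n => (n : ℤ)) fun n m hnm => ?_
  rw [hT]
  exact e.orthonormal.2 (by omega)

end Hilbert

/-- if `P_k` is a finite linear combination of the `T_{n,m}` with `m - n = k`,
for each `k` in a finite set `F ⊂ ℤ`, then `‖P_j‖ ≤ ‖∑_{k ∈ F} P_k‖` for every `j ∈ F`. -/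
theorem norm_component_le_norm_sum {H : Type*} [NormedAddCommGroup H]
    [InnerProductSpace ℂ H] [CompleteSpace H] (e : HilbertBasis ℕ ℂ H) (T : H →L[ℂ] H)
    (hT : ∀ n : ℕ, T (e n) = e (n + 1))
    (F : Finset ℤ) (P : ℤ → H →L[ℂ] H)
    (hP : ∀ k ∈ F, P k ∈ Submodule.span ℂ
      {A : H →L[ℂ] H | ∃ n m : ℕ, (m : ℤ) - (n : ℤ) = k ∧ A = Tnm T n m}) :
    ∀ j ∈ F, ‖P j‖ ≤ ‖∑ k ∈ F, P k‖ := by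
  let : CStarAlgebra (H →L[ℂ] H) := {}
  exact norm_component_le_norm_sum_general (hasGaugeSymmetry_of_apply_eq_succ e hT) F P hP
end

section
/- If A ∈ 𝒯 and A_k = 0 for every k ∈ ℤ, then A = 0. -/
/-- The Toeplitz algebra: the norm-closed star-subalgebra of `B(H)` generated by `T`. -/
noncomputable def ToeplitzAlg {H : Type*} [NormedAddCommGroup H] [InnerProductSpace ℂ H]
    [CompleteSpace H] (T : H →L[ℂ] H) : StarSubalgebra ℂ (H →L[ℂ] H) :=
  StarAlgebra.elemental ℂ T

/-- The `k`-th Fourier coefficient `A_k = (1/2π) ∫₀^{2π} e^{-ikθ} U_θ A U_θ* dθ`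
(a Bochner integral in `B(H)`). -/
noncomputable def opFourierCoeff {H : Type*} [NormedAddCommGroup H] [InnerProductSpace ℂ H]
    [CompleteSpace H] (U : ℝ → H →L[ℂ] H) (A : H →L[ℂ] H) (k : ℤ) : H →L[ℂ] H :=
  (2 * Real.pi)⁻¹ • ∫ θ in (0 : ℝ)..(2 * Real.pi),
    Complex.exp (-(k : ℂ) * θ * Complex.I) • (U θ * A * ContinuousLinearMap.adjoint (U θ))

/-!
Let `U_θ e_m = exp(i w_m θ) e_m` with integer weights `w_m`. The `(m, n)` matrix entry of
`U_θ A U_θ*` is that of `A` times `exp(i(w_m - w_n)θ)`, so the Fourier coefficient of index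
`w_m - w_n` has the same `(m, n)` entry as `A`. This needs `θ ↦ U_θ A U_θ*` to be integrable:
otherwise the Bochner integral is `0` by convention. On the Toeplitz algebra this map is even norm
continuous: the operators for which it is form a closed star-subalgebra, which contains `T` because
`U_θ T U_θ* = exp(iθ) T`.
-/

section DiagonalOperator

open scoped InnerProduct InnerProductSpace

variable {ι 𝕜 H : Type*} [RCLike 𝕜] [NormedAddCommGroup H] [InnerProductSpace 𝕜 H]

theorem eq_of_forall_apply_hilbertBasis_eq {F : Type*} [AddCommMonoid F] [Module 𝕜 F]
    [TopologicalSpace F] [T2Space F] (e : HilbertBasis ι 𝕜 H) {A B : H →L[𝕜] F}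
    (h : ∀ i, A (e i) = B (e i)) : A = B :=
  ContinuousLinearMap.ext_on (Submodule.dense_iff_topologicalClosure_eq_top.2 e.dense_span)
    (Set.forall_mem_range.2 h)

theorem eq_of_forall_inner_hilbertBasis_eq (e : HilbertBasis ι 𝕜 H) {x y : H}
    (h : ∀ i, ⟪e i, x⟫_𝕜 = ⟪e i, y⟫_𝕜) : x = y :=
  e.repr.injective <| lp.ext <| funext fun i => by
    simpa only [e.repr_apply_apply] using h i

variable [CompleteSpace H] (e : HilbertBasis ι 𝕜 H) {V : H →L[𝕜] H} {c : ι → 𝕜}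

theorem adjoint_apply_hilbertBasis_of_diagonal (hV : ∀ i, V (e i) = c i • e i) (i : ι) :
    (V†) (e i) = star (c i) • e i := by
  refine eq_of_forall_inner_hilbertBasis_eq e fun j => ?_
  rw [ContinuousLinearMap.adjoint_inner_right, hV, inner_smul_left, inner_smul_right]
  obtain rfl | hji := eq_or_ne j i
  · rfl
  · rw [e.orthonormal.2 hji, mul_zero, mul_zero]

theorem mem_unitary_of_diagonal (hV : ∀ i, V (e i) = c i • e i) (hc : ∀ i, ‖c i‖ = 1) :
    V ∈ unitary (H →L[𝕜] H) := by
  have hV' := adjoint_apply_hilbertBasis_of_diagonal e hV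
  have hcc (i : ι) : c i * star (c i) = 1 := by simpa [hc i] using RCLike.mul_conj (c i)
  rw [Unitary.mem_iff, ContinuousLinearMap.star_eq_adjoint]
  constructor <;> refine eq_of_forall_apply_hilbertBasis_eq e fun i => ?_
  · rw [mul_apply_eq_comp, hV, map_smul, hV', smul_smul, hcc, one_smul, one_apply_eq_self]
  · rw [mul_apply_eq_comp, hV', map_smul, hV, smul_smul, mul_comm, hcc, one_smul,
      one_apply_eq_self]

theorem inner_conj_apply_of_diagonal (hV : ∀ i, V (e i) = c i • e i) (A : H →L[𝕜] H) (i j : ι) :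
    ⟪e i, (V * A * V†) (e j)⟫_𝕜 = c i * star (c j) * ⟪e i, A (e j)⟫_𝕜 := by
  have hV' := adjoint_apply_hilbertBasis_of_diagonal e hV
  rw [mul_apply_eq_comp, mul_apply_eq_comp, ← ContinuousLinearMap.adjoint_inner_left, hV', hV',
    map_smul, inner_smul_left, inner_smul_right, starRingEnd_apply, star_star, mul_assoc]

end DiagonalOperator

section FourierCoefficient

open scoped InnerProduct InnerProductSpace
open MeasureTheory Complex

variable {ι H : Type*} [NormedAddCommGroup H] [InnerProductSpace ℂ H] [CompleteSpace H]

theorem inner_opFourierCoeff_apply {U : ℝ → H →L[ℂ] H} {A : H →L[ℂ] H}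
    (hA : IntervalIntegrable (fun θ => U θ * A * (U θ)†) volume 0 (2 * Real.pi))
    (k : ℤ) (x y : H) :
    ⟪x, opFourierCoeff U A k y⟫_ℂ = (2 * Real.pi)⁻¹ •
      ∫ θ in (0 : ℝ)..(2 * Real.pi), exp (-(k : ℂ) * θ * I) * ⟪x, (U θ * A * (U θ)†) y⟫_ℂ := by
  let entry : (H →L[ℂ] H) →L[ℂ] ℂ := innerSL ℂ x ∘L ContinuousLinearMap.apply ℂ H y
  have hint : IntervalIntegrable (fun θ : ℝ => exp (-(k : ℂ) * θ * I) • (U θ * A * (U θ)†))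
      volume 0 (2 * Real.pi) := hA.continuousOn_smul (by fun_prop)
  calc entry (opFourierCoeff U A k)
      = (2 * Real.pi)⁻¹ • ∫ θ in (0 : ℝ)..(2 * Real.pi),
          entry (exp (-(k : ℂ) * θ * I) • (U θ * A * (U θ)†)) := by
        rw [opFourierCoeff, entry.map_smul_of_tower, entry.intervalIntegral_comp_comm hint]
    _ = _ := by simp only [map_smul, smul_eq_mul]; rfl

theorem inner_opFourierCoeff_sub_apply_of_diagonal (e : HilbertBasis ι ℂ H) {w : ι → ℤ}
    {U : ℝ → H →L[ℂ] H} (hU : ∀ (θ : ℝ) (i : ι), U θ (e i) = exp ((w i : ℂ) * θ * I) • e i)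
    {A : H →L[ℂ] H}
    (hA : IntervalIntegrable (fun θ => U θ * A * (U θ)†) volume 0 (2 * Real.pi)) (i j : ι) :
    ⟪e i, opFourierCoeff U A (w i - w j) (e j)⟫_ℂ = ⟪e i, A (e j)⟫_ℂ := by
  have hphase (θ : ℝ) : exp (-((w i - w j : ℤ) : ℂ) * θ * I) *
      (exp ((w i : ℂ) * θ * I) * star (exp ((w j : ℂ) * θ * I))) = 1 := by
    rw [← starRingEnd_apply, ← exp_conj, ← exp_add, ← exp_add, ← exp_zero]
    congr 1
    simp only [map_mul, conj_I, conj_ofReal, map_intCast]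
    push_cast
    ring
  simp only [inner_opFourierCoeff_apply hA, inner_conj_apply_of_diagonal e (hU _), ← mul_assoc]
  simp only [mul_assoc _ _ (star _), hphase, one_mul, intervalIntegral.integral_const, sub_zero]
  exact inv_smul_smul₀ Real.two_pi_pos.ne' _

end FourierCoefficient

section ContinuousOrbit

theorem isClosed_setOfPred_continuous_of_equicontinuous {X Y Z : Type*} [TopologicalSpace X]
    [TopologicalSpace Y] [UniformSpace Z] {F : X → Y → Z} (hF : Equicontinuous F) :
    IsClosed {y | Continuous fun x => F x y} :=
  (UniformFun.isClosed_setOfPred_continuous X).preimage (equicontinuous_iff_continuous.1 hF)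

/-- The star-subalgebra of those `a` whose orbit map `x ↦ Φ x a` under a family `Φ` of star
homomorphisms is continuous; it reduces continuity of orbits to generators of `A`. -/
def continuousOrbitSubalgebra {X R A B : Type*} [TopologicalSpace X] [CommSemiring R] [StarRing R]
    [Semiring A] [StarRing A] [Algebra R A] [StarModule R A]
    [Semiring B] [StarRing B] [Algebra R B]
    [TopologicalSpace B] [IsTopologicalSemiring B] [ContinuousStar B] (Φ : X → A →⋆ₐ[R] B) :
    StarSubalgebra R A where
  carrier := {a | Continuous fun x => Φ x a}
  mul_mem' ha hb := (Continuous.mul ha hb).congr fun x => (map_mul (Φ x) _ _).symm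
  add_mem' ha hb := (Continuous.add ha hb).congr fun x => (map_add (Φ x) _ _).symm
  algebraMap_mem' r := continuous_const.congr fun x => (AlgHomClass.commutes (Φ x) r).symm
  star_mem' ha := (Continuous.star ha).congr fun x => (map_star (Φ x) _).symm

theorem continuous_apply_of_mem_elemental {X A B : Type*} [TopologicalSpace X] [CStarAlgebra A]
    [CStarAlgebra B] {Φ : X → A →⋆ₐ[ℂ] B} {t a : A} (ht : Continuous fun x => Φ x t)
    (ha : a ∈ StarAlgebra.elemental ℂ t) : Continuous fun x => Φ x a := by
  have hΦ : Equicontinuous fun x => (Φ x : A → B) :=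
    (LipschitzWith.uniformEquicontinuous _ 1 fun x => AddMonoidHomClass.lipschitz_of_bound_nnnorm
      (Φ x) 1 fun b => by
        simpa only [one_mul] using NonUnitalStarAlgHom.nnnorm_apply_le (Φ x) b).equicontinuous
  exact StarAlgebra.elemental.le_of_mem (S := continuousOrbitSubalgebra Φ)
    (isClosed_setOfPred_continuous_of_equicontinuous hΦ) ht ha

theorem continuous_conj_of_mem_elemental {X A : Type*} [TopologicalSpace X] [CStarAlgebra A]
    {V : X → A} (hV : ∀ x, V x ∈ unitary A) {t a : A}
    (ht : Continuous fun x => V x * t * star (V x)) (ha : a ∈ StarAlgebra.elemental ℂ t) :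
    Continuous fun x => V x * a * star (V x) :=
  continuous_apply_of_mem_elemental
    (Φ := fun x => (Unitary.conjStarAlgAut ℂ A ⟨V x, hV x⟩ : A →⋆ₐ[ℂ] A)) ht ha

end ContinuousOrbit

section WeightedShift

open Complex

variable {ι H : Type*} [NormedAddCommGroup H] [InnerProductSpace ℂ H] [CompleteSpace H]
  (e : HilbertBasis ι ℂ H) {w : ι → ℤ} {U : ℝ → H →L[ℂ] H}

theorem mem_unitary_of_apply_eq_exp_smul
    (hU : ∀ (θ : ℝ) (i : ι), U θ (e i) = exp ((w i : ℂ) * θ * I) • e i) (θ : ℝ) :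
    U θ ∈ unitary (H →L[ℂ] H) :=
  mem_unitary_of_diagonal e (hU θ) fun i => by
    exact_mod_cast norm_exp_ofReal_mul_I ((w i : ℝ) * θ)

variable {T : H →L[ℂ] H} {a : ι → ℂ} {s : ι → ι} {d : ℤ}

theorem conj_weightedShift_eq_exp_smul
    (hU : ∀ (θ : ℝ) (i : ι), U θ (e i) = exp ((w i : ℂ) * θ * I) • e i)
    (hT : ∀ i, T (e i) = a i • e (s i)) (hs : ∀ i, w (s i) = w i + d) (θ : ℝ) :
    U θ * T * star (U θ) = exp ((d : ℂ) * θ * I) • T := by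
  have hcomm : U θ * T = exp ((d : ℂ) * θ * I) • (T * U θ) :=
    eq_of_forall_apply_hilbertBasis_eq e fun i => by
      have hphase : exp ((w (s i) : ℂ) * θ * I) =
          exp ((d : ℂ) * θ * I) * exp ((w i : ℂ) * θ * I) := by
        rw [hs, ← exp_add]
        push_cast
        ring_nf
      simp only [mul_apply_eq_comp, smul_apply, hT, hU, map_smul, smul_smul, hphase]
      ring_nf
  rw [hcomm, smul_mul_assoc, mul_assoc T,
    Unitary.mul_star_self_of_mem (mem_unitary_of_apply_eq_exp_smul e hU θ), mul_one]

theorem continuous_conj_of_mem_toeplitzAlg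
    (hU : ∀ (θ : ℝ) (i : ι), U θ (e i) = exp ((w i : ℂ) * θ * I) • e i)
    (hT : ∀ i, T (e i) = a i • e (s i)) (hs : ∀ i, w (s i) = w i + d)
    {A : H →L[ℂ] H} (hA : A ∈ ToeplitzAlg T) :
    Continuous fun θ => U θ * A * ContinuousLinearMap.adjoint (U θ) := by
  have hcontT : Continuous fun θ => U θ * T * star (U θ) := by
    simp only [conj_weightedShift_eq_exp_smul e hU hT hs]
    fun_prop
  exact continuous_conj_of_mem_elemental (mem_unitary_of_apply_eq_exp_smul e hU) hcontT hA

end WeightedShift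

theorem eq_zero_of_opFourierCoeff_eq_zero_general {ι H : Type*} [NormedAddCommGroup H]
    [InnerProductSpace ℂ H] [CompleteSpace H] (e : HilbertBasis ι ℂ H) (w : ι → ℤ)
    (U : ℝ → H →L[ℂ] H)
    (hU : ∀ (θ : ℝ) (i : ι), U θ (e i) = Complex.exp ((w i : ℂ) * θ * Complex.I) • e i)
    (A : H →L[ℂ] H)
    (hA : IntervalIntegrable (fun θ => U θ * A * ContinuousLinearMap.adjoint (U θ))
      MeasureTheory.volume 0 (2 * Real.pi))
    (h : ∀ k : ℤ, opFourierCoeff U A k = 0) : A = 0 := by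
  refine eq_of_forall_apply_hilbertBasis_eq e fun j =>
    eq_of_forall_inner_hilbertBasis_eq e fun i => ?_
  rw [← inner_opFourierCoeff_sub_apply_of_diagonal e hU hA, h]

/-- if all Fourier coefficients of `A ∈ 𝒯` vanish, then `A = 0`. -/
theorem eq_zero_of_opFourierCoeff_eq_zero {H : Type*} [NormedAddCommGroup H]
    [InnerProductSpace ℂ H] [CompleteSpace H] (e : HilbertBasis ℕ ℂ H) (T : H →L[ℂ] H)
    (hT : ∀ n : ℕ, T (e n) = e (n + 1))
    (U : ℝ → H →L[ℂ] H)
    (hU : ∀ (θ : ℝ) (n : ℕ), U θ (e n) = Complex.exp ((n : ℂ) * θ * Complex.I) • e n)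
    (A : H →L[ℂ] H) (hA : A ∈ ToeplitzAlg T)
    (h : ∀ k : ℤ, opFourierCoeff U A k = 0) : A = 0 := by
  have hU' (θ : ℝ) (n : ℕ) : U θ (e n) = Complex.exp (((n : ℤ) : ℂ) * θ * Complex.I) • e n := by
    rw [hU, Int.cast_natCast]
  have hcont := continuous_conj_of_mem_toeplitzAlg e hU' (a := 1) (by simpa using hT)
    Nat.cast_succ hA
  exact eq_zero_of_opFourierCoeff_eq_zero_general e _ U hU' A (hcont.intervalIntegrable _ _) h
end

section
/- Every A ∈ 𝒯₀ is diagonal with respect to the basis (e_n) (i.e., A e_n = ⟨A e_n, e_n⟩ e_n for all n), the sequence (⟨A e_n, e_n⟩)_n converges, and the map A ↦ (⟨A e_n, e_n⟩)_{n∈ℕ} is an isometric star-algebra isomorphism from 𝒯₀ onto the C*-algebra of convergent complex sequences (i.e., onto C₀(ℕ) + ℂ·1, with supremum norm). -/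
open scoped ComplexInnerProductSpace

/-! Operators diagonal with respect to an orthonormal basis form an isometric copy of `ℓ^∞`. Under
this identification `Tⁿ (T*)ⁿ` is the indicator of `{m | n ≤ m}`, so `𝒯₀` corresponds to the closed
span of these indicators. A sequence `x` frozen at time `N`, i.e. `m ↦ x (min m N)`, is by telescoping
a combination of such indicators, and these frozen sequences converge uniformly to `x` as soon as
`x` converges. -/

open Filter Topology
open scoped ENNReal lp InnerProductSpace

section ConvergentSequences

variable {𝕜 : Type*} [NormedField 𝕜]

variable (𝕜) in
/-- The space `c` of convergent sequences, as a subspace of the bounded ones. -/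
def convergentSequences : Submodule 𝕜 ℓ^∞(ℕ, 𝕜) where
  carrier := {x | ∃ l, Tendsto x atTop (𝓝 l)}
  zero_mem' := ⟨0, tendsto_const_nhds⟩
  add_mem' := fun ⟨k, hk⟩ ⟨l, hl⟩ => ⟨k + l, hk.add hl⟩
  smul_mem' := fun c _ ⟨l, hl⟩ => ⟨c • l, hl.const_smul c⟩

theorem exists_mem_convergentSequences_coe_eq {x : ℕ → 𝕜} (hx : ∃ l, Tendsto x atTop (𝓝 l)) :
    ∃ y ∈ convergentSequences 𝕜, ⇑y = x := by
  obtain ⟨l, hl⟩ := hx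
  have hbdd : BddAbove (Set.range fun n => ‖x n‖) := hl.norm.bddAbove_range
  exact ⟨⟨x, memℓp_infty hbdd⟩, ⟨l, hl⟩, rfl⟩

theorem isClosed_convergentSequences [CompleteSpace 𝕜] :
    IsClosed (convergentSequences 𝕜 : Set ℓ^∞(ℕ, 𝕜)) := by
  refine isClosed_of_closure_subset fun x hx => ?_
  refine cauchySeq_tendsto_of_complete (Metric.cauchySeq_iff'.mpr fun ε hε => ?_)
  obtain ⟨y, ⟨l, hl⟩, hxy⟩ := Metric.mem_closure_iff.mp hx (ε / 3) (by positivity)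
  obtain ⟨N, hN⟩ := Metric.cauchySeq_iff'.mp hl.cauchySeq (ε / 3) (by positivity)
  have hdist (n : ℕ) : dist (x n) (y n) < ε / 3 :=
    ((lp.lipschitzWith_one_eval ∞ n).dist_le_mul x y).trans_lt (by simpa using hxy)
  refine ⟨N, fun n hn => ?_⟩
  calc dist (x n) (x N) ≤ dist (x n) (y n) + dist (y n) (y N) + dist (y N) (x N) :=
        dist_triangle4 ..
    _ < ε / 3 + ε / 3 + ε / 3 := by
        gcongr
        exacts [hdist n, hN n hn, dist_comm (x N) (y N) ▸ hdist N]
    _ = ε := by ring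

variable (𝕜) in
/-- The indicator sequence `0, …, 0, 1, 1, …` of `{m | n ≤ m}`. -/
noncomputable def tailIndicator (n : ℕ) : ℓ^∞(ℕ, 𝕜) :=
  ⟨fun m => if n ≤ m then 1 else 0, memℓp_infty ⟨1, by
    rintro _ ⟨m, rfl⟩
    dsimp only
    split_ifs <;> simp⟩⟩

theorem tailIndicator_apply (n m : ℕ) : tailIndicator 𝕜 n m = if n ≤ m then 1 else 0 := rfl

theorem tailIndicator_mem_convergentSequences (n : ℕ) :
    tailIndicator 𝕜 n ∈ convergentSequences 𝕜 := by
  refine ⟨1, tendsto_const_nhds.congr' ?_⟩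
  filter_upwards [eventually_ge_atTop n] with m hm
  rw [tailIndicator_apply, if_pos hm]

/-- The sequence `x 0, …, x (N - 1), x N, x N, …`, written as a combination of tail indicators. -/
noncomputable def stoppedSequence (x : ℕ → 𝕜) (N : ℕ) : ℓ^∞(ℕ, 𝕜) :=
  x 0 • tailIndicator 𝕜 0 + ∑ n ∈ Finset.range N, (x (n + 1) - x n) • tailIndicator 𝕜 (n + 1)

theorem stoppedSequence_apply (x : ℕ → 𝕜) (N m : ℕ) : stoppedSequence x N m = x (min m N) := by
  have hfilter : {n ∈ Finset.range N | n + 1 ≤ m} = Finset.range (min m N) := by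
    ext n
    simp only [Finset.mem_filter, Finset.mem_range]
    omega
  calc stoppedSequence x N m
      = lp.evalₗ (𝕜 := 𝕜) (fun _ => 𝕜) ∞ m (stoppedSequence x N) := rfl
    _ = x 0 + ∑ n ∈ Finset.range N, if n + 1 ≤ m then x (n + 1) - x n else 0 := by
        rw [stoppedSequence, map_add, map_smul, map_sum]
        simp [tailIndicator_apply]
    _ = x (min m N) := by
        rw [← Finset.sum_filter, hfilter, Finset.sum_range_sub, add_sub_cancel]

theorem stoppedSequence_mem_span (x : ℕ → 𝕜) (N : ℕ) :
    stoppedSequence x N ∈ Submodule.span 𝕜 (Set.range (tailIndicator 𝕜)) := by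
  have hmem (n : ℕ) : tailIndicator 𝕜 n ∈ Submodule.span 𝕜 (Set.range (tailIndicator 𝕜)) :=
    Submodule.subset_span ⟨n, rfl⟩
  exact add_mem (Submodule.smul_mem _ _ (hmem 0))
    (sum_mem fun n _ => Submodule.smul_mem _ _ (hmem (n + 1)))

theorem tendsto_stoppedSequence {x : ℓ^∞(ℕ, 𝕜)} (hx : CauchySeq x) :
    Tendsto (stoppedSequence x) atTop (𝓝 x) := by
  refine Metric.tendsto_atTop.mpr fun ε hε => ?_
  obtain ⟨N, hN⟩ := Metric.cauchySeq_iff.mp hx (ε / 2) (half_pos hε)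
  refine ⟨N, fun n hn => ?_⟩
  rw [dist_eq_norm]
  refine (lp.norm_le_of_forall_le (half_pos hε).le fun m => ?_).trans_lt (half_lt_self hε)
  rw [lp.coeFn_sub, Pi.sub_apply, stoppedSequence_apply]
  rcases le_total m n with hmn | hnm
  · simpa [hmn] using (half_pos hε).le
  · rw [min_eq_right hnm, ← dist_eq_norm]
    exact (hN n hn m (hn.trans hnm)).le

theorem topologicalClosure_span_tailIndicator [CompleteSpace 𝕜] :
    (Submodule.span 𝕜 (Set.range (tailIndicator 𝕜))).topologicalClosure =
      convergentSequences 𝕜 := by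
  refine le_antisymm (Submodule.topologicalClosure_minimal _ ?_ isClosed_convergentSequences) ?_
  · rw [Submodule.span_le]
    exact Set.range_subset_iff.mpr tailIndicator_mem_convergentSequences
  · rintro x ⟨l, hl⟩
    exact mem_closure_of_tendsto (tendsto_stoppedSequence hl.cauchySeq)
      (.of_forall (stoppedSequence_mem_span x))

end ConvergentSequences

section DiagonalOperator

variable {ι 𝕜 E : Type*} [RCLike 𝕜] [NormedAddCommGroup E] [InnerProductSpace 𝕜 E]

variable (ι 𝕜) in
/-- Pointwise multiplication of square-summable families by bounded ones. -/
noncomputable def boundedMulL2 : ℓ^∞(ι, 𝕜) →L[𝕜] ℓ²(ι, 𝕜) →L[𝕜] ℓ²(ι, 𝕜) :=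
  lp.holderL 2 (fun _ => ContinuousLinearMap.mul 𝕜 𝕜) (K := 1)
    fun _ => ContinuousLinearMap.opNorm_mul_le 𝕜 𝕜

theorem norm_boundedMulL2_apply_le (x : ℓ^∞(ι, 𝕜)) : ‖boundedMulL2 ι 𝕜 x‖ ≤ ‖x‖ := by
  simpa using (boundedMulL2 ι 𝕜).le_of_opNorm_le (lp.norm_holderL_le 2 _ _) x

/-- The operator with diagonal entries `x i` in the Hilbert basis `b`, depending linearly on the
bounded family `x`. -/
noncomputable def diagonalOperator (b : HilbertBasis ι 𝕜 E) : ℓ^∞(ι, 𝕜) →L[𝕜] E →L[𝕜] E :=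
  b.repr.symm.toContinuousLinearEquiv.conjContinuousAlgEquiv.toContinuousLinearEquiv ∘L
    boundedMulL2 ι 𝕜

variable (b : HilbertBasis ι 𝕜 E)

theorem repr_diagonalOperator_apply (x : ℓ^∞(ι, 𝕜)) (v : E) (i : ι) :
    b.repr (diagonalOperator b x v) i = x i * b.repr v i := by
  simp [diagonalOperator, boundedMulL2, lp.holderL]

theorem diagonalOperator_apply_basis (x : ℓ^∞(ι, 𝕜)) (i : ι) :
    diagonalOperator b x (b i) = x i • b i := by
  classical
  apply b.repr.injective
  ext j
  simp only [repr_diagonalOperator_apply, map_smul, lp.coeFn_smul, Pi.smul_apply, b.repr_self,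
    smul_eq_mul]
  rcases eq_or_ne j i with rfl | hji
  · rfl
  · simp [hji]

theorem inner_diagonalOperator_apply_basis (x : ℓ^∞(ι, 𝕜)) (i : ι) :
    ⟪b i, diagonalOperator b x (b i)⟫_𝕜 = x i := by
  rw [diagonalOperator_apply_basis, inner_smul_right,
    inner_self_eq_one_of_norm_eq_one (b.orthonormal.norm_eq_one i), mul_one]

theorem eq_diagonalOperator_of_apply_basis {A : E →L[𝕜] E} {x : ℓ^∞(ι, 𝕜)}
    (hA : ∀ i, A (b i) = x i • b i) : A = diagonalOperator b x := by
  refine ContinuousLinearMap.ext_on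
    (Submodule.dense_iff_topologicalClosure_eq_top.mpr b.dense_span) ?_
  rintro _ ⟨i, rfl⟩
  rw [hA, diagonalOperator_apply_basis]

theorem norm_diagonalOperator (x : ℓ^∞(ι, 𝕜)) : ‖diagonalOperator b x‖ = ‖x‖ := by
  apply le_antisymm
  · refine ContinuousLinearMap.opNorm_le_bound _ (norm_nonneg x) fun v => ?_
    calc ‖diagonalOperator b x v‖ = ‖boundedMulL2 ι 𝕜 x (b.repr v)‖ := b.repr.symm.norm_map _
      _ ≤ ‖x‖ * ‖b.repr v‖ :=
        (boundedMulL2 ι 𝕜 x).le_of_opNorm_le (norm_boundedMulL2_apply_le x) _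
      _ = ‖x‖ * ‖v‖ := by rw [b.repr.norm_map]
  · refine lp.norm_le_of_forall_le (norm_nonneg _) fun i => ?_
    simpa [diagonalOperator_apply_basis, norm_smul, b.orthonormal.norm_eq_one] using
      (diagonalOperator b x).le_opNorm (b i)

theorem diagonalOperator_mul (x y : ℓ^∞(ι, 𝕜)) :
    diagonalOperator b (x * y) = diagonalOperator b x * diagonalOperator b y := by
  refine (eq_diagonalOperator_of_apply_basis b fun i => ?_).symm
  simp [diagonalOperator_apply_basis, smul_smul, mul_comm]

theorem diagonalOperator_star [CompleteSpace E] (x : ℓ^∞(ι, 𝕜)) :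
    diagonalOperator b (star x) = star (diagonalOperator b x) := by
  rw [ContinuousLinearMap.star_eq_adjoint, ContinuousLinearMap.eq_adjoint_iff]
  intro v w
  rw [← b.repr.inner_map_map, ← b.repr.inner_map_map v, lp.inner_eq_tsum, lp.inner_eq_tsum]
  congr! 2 with i
  simp only [repr_diagonalOperator_apply, lp.star_apply, RCLike.inner_apply, map_mul,
    RCLike.star_def, RCLike.conj_conj]
  ring

theorem map_diagonalOperator_topologicalClosure (S : Submodule 𝕜 ℓ^∞(ι, 𝕜)) :
    S.topologicalClosure.map (diagonalOperator b : ℓ^∞(ι, 𝕜) →ₗ[𝕜] E →L[𝕜] E) =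
      (S.map (diagonalOperator b : ℓ^∞(ι, 𝕜) →ₗ[𝕜] E →L[𝕜] E)).topologicalClosure := by
  have hisom : Isometry (diagonalOperator b) :=
    AddMonoidHomClass.isometry_of_norm _ (norm_diagonalOperator b)
  exact SetLike.coe_injective (hisom.isClosedEmbedding.closure_image_eq S).symm

end DiagonalOperator

section Shift

variable {𝕜 E : Type*} [RCLike 𝕜] [NormedAddCommGroup E] [InnerProductSpace 𝕜 E]
  {b : HilbertBasis ℕ 𝕜 E} {T : E →L[𝕜] E}

theorem shift_pow_apply_basis (hT : ∀ n, T (b n) = b (n + 1)) (n m : ℕ) :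
    (T ^ n) (b m) = b (m + n) := by
  induction n with
  | zero => simp
  | succ k ih => rw [pow_succ', mul_apply_eq_comp, ih, hT, add_assoc]

variable [CompleteSpace E]

theorem adjoint_shift_pow_apply_basis (hT : ∀ n, T (b n) = b (n + 1)) (n m : ℕ) :
    (ContinuousLinearMap.adjoint T ^ n) (b m) = if n ≤ m then b (m - n) else 0 := by
  apply b.repr.injective
  ext k
  have hinner := orthonormal_iff_ite.mp b.orthonormal
  rw [b.repr_apply_apply, b.repr_apply_apply, ← ContinuousLinearMap.star_eq_adjoint, ← star_pow,
    ContinuousLinearMap.star_eq_adjoint, ContinuousLinearMap.adjoint_inner_right,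
    shift_pow_apply_basis hT, hinner]
  split_ifs <;> grind [inner_zero_right]

theorem shift_pow_mul_adjoint_pow_eq_diagonalOperator (hT : ∀ n, T (b n) = b (n + 1)) (n : ℕ) :
    T ^ n * ContinuousLinearMap.adjoint T ^ n = diagonalOperator b (tailIndicator 𝕜 n) := by
  refine eq_diagonalOperator_of_apply_basis b fun m => ?_
  rw [mul_apply_eq_comp, adjoint_shift_pow_apply_basis hT, tailIndicator_apply]
  split_ifs with hnm
  · rw [shift_pow_apply_basis hT, Nat.sub_add_cancel hnm, one_smul]
  · rw [map_zero, zero_smul]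

/-- The space `𝒯₀`: the closed linear span of the operators `T_{n,n} = Tⁿ (T*)ⁿ`, over `ℝ` or
`ℂ`. -/
noncomputable def toeplitzDiagonal (T : E →L[𝕜] E) : Submodule 𝕜 (E →L[𝕜] E) :=
  (Submodule.span 𝕜 {B | ∃ n, B = T ^ n * ContinuousLinearMap.adjoint T ^ n}).topologicalClosure

theorem toeplitzDiagonal_eq_map_convergentSequences (hT : ∀ n, T (b n) = b (n + 1)) :
    toeplitzDiagonal T =
      (convergentSequences 𝕜).map (diagonalOperator b : ℓ^∞(ℕ, 𝕜) →ₗ[𝕜] E →L[𝕜] E) := by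
  have hgen : {B | ∃ n, B = T ^ n * ContinuousLinearMap.adjoint T ^ n} =
      diagonalOperator b '' Set.range (tailIndicator 𝕜) := by
    rw [← Set.range_comp]
    ext B
    simp only [shift_pow_mul_adjoint_pow_eq_diagonalOperator hT, Set.mem_ofPred_eq, Set.mem_range,
      Function.comp_apply, eq_comm]
  rw [← topologicalClosure_span_tailIndicator, map_diagonalOperator_topologicalClosure,
    Submodule.map_span, toeplitzDiagonal, hgen]
  rfl

end Shift

theorem T0_iso_convergent_sequences_general {𝕜 E : Type*} [RCLike 𝕜] [NormedAddCommGroup E]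
    [InnerProductSpace 𝕜 E] [CompleteSpace E] (b : HilbertBasis ℕ 𝕜 E) (T : E →L[𝕜] E)
    (hT : ∀ n, T (b n) = b (n + 1)) :
    (∀ A ∈ toeplitzDiagonal T,
      (∀ n, A (b n) = ⟪b n, A (b n)⟫_𝕜 • b n) ∧
      (∃ l, Tendsto (fun n => ⟪b n, A (b n)⟫_𝕜) atTop (𝓝 l)) ∧
      ‖A‖ = ⨆ n, ‖⟪b n, A (b n)⟫_𝕜‖) ∧
    (∀ A ∈ toeplitzDiagonal T, ∀ B ∈ toeplitzDiagonal T,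
      (∀ n, ⟪b n, (A * B) (b n)⟫_𝕜 = ⟪b n, A (b n)⟫_𝕜 * ⟪b n, B (b n)⟫_𝕜) ∧
      (∀ n, ⟪b n, star A (b n)⟫_𝕜 = star ⟪b n, A (b n)⟫_𝕜)) ∧
    (∀ x : ℕ → 𝕜, (∃ l, Tendsto x atTop (𝓝 l)) →
      ∃ A ∈ toeplitzDiagonal T, ∀ n, ⟪b n, A (b n)⟫_𝕜 = x n) := by
  rw [toeplitzDiagonal_eq_map_convergentSequences hT]
  refine ⟨?diagonal, ?starHom, ?surjective⟩
  case diagonal =>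
    rintro _ ⟨x, hx, rfl⟩
    simp only [ContinuousLinearMap.coe_coe, inner_diagonalOperator_apply_basis]
    exact ⟨diagonalOperator_apply_basis b x, hx,
      (norm_diagonalOperator b x).trans (lp.norm_eq_ciSup x)⟩
  case starHom =>
    rintro _ ⟨x, -, rfl⟩ _ ⟨y, -, rfl⟩
    simp only [ContinuousLinearMap.coe_coe, ← diagonalOperator_mul, ← diagonalOperator_star,
      inner_diagonalOperator_apply_basis]
    exact ⟨fun _ => rfl, fun _ => rfl⟩
  case surjective =>
    intro x hx
    obtain ⟨y, hy, rfl⟩ := exists_mem_convergentSequences_coe_eq hx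
    exact ⟨diagonalOperator b y, ⟨y, hy, rfl⟩, inner_diagonalOperator_apply_basis b y⟩

/-- every `A ∈ 𝒯₀` (the closed span of the `T_{n,n}`) is diagonal w.r.t. `(e_n)`,
its diagonal `(⟨A e_n, e_n⟩)_n` is a convergent sequence, and `A ↦ (⟨A e_n, e_n⟩)_n` is an
isometric star-algebra isomorphism of `𝒯₀` onto the C*-algebra of convergent sequences. -/
theorem T0_iso_convergent_sequences {H : Type*} [NormedAddCommGroup H]
    [InnerProductSpace ℂ H] [CompleteSpace H] (e : HilbertBasis ℕ ℂ H) (T : H →L[ℂ] H)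
    (hT : ∀ n : ℕ, T (e n) = e (n + 1)) :
    (∀ A ∈ (Submodule.span ℂ
        {B : H →L[ℂ] H | ∃ n : ℕ, B = Tnm T n n}).topologicalClosure,
      -- `A` is diagonal
      (∀ n : ℕ, A (e n) = ⟪e n, A (e n)⟫ • e n) ∧
      -- the diagonal sequence converges
      (∃ l : ℂ, Filter.Tendsto (fun n : ℕ => ⟪e n, A (e n)⟫) Filter.atTop (nhds l)) ∧
      -- the map `A ↦ diagonal` is isometric
      ‖A‖ = ⨆ n : ℕ, ‖(⟪e n, A (e n)⟫ : ℂ)‖) ∧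
    -- the map is a star-algebra homomorphism (it is linear since `⟪e n, ·⟫` is linear)
    (∀ A ∈ (Submodule.span ℂ
        {B : H →L[ℂ] H | ∃ n : ℕ, B = Tnm T n n}).topologicalClosure,
      ∀ B ∈ (Submodule.span ℂ
        {B : H →L[ℂ] H | ∃ n : ℕ, B = Tnm T n n}).topologicalClosure,
      (∀ n : ℕ, ⟪e n, (A * B) (e n)⟫ = ⟪e n, A (e n)⟫ * ⟪e n, B (e n)⟫) ∧
      (∀ n : ℕ, ⟪e n, (star A) (e n)⟫ = star ⟪e n, A (e n)⟫)) ∧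
    -- the map is onto the algebra of convergent sequences
    (∀ x : ℕ → ℂ, (∃ l : ℂ, Filter.Tendsto x Filter.atTop (nhds l)) →
      ∃ A ∈ (Submodule.span ℂ
        {B : H →L[ℂ] H | ∃ n : ℕ, B = Tnm T n n}).topologicalClosure,
        ∀ n : ℕ, ⟪e n, A (e n)⟫ = x n) :=
  T0_iso_convergent_sequences_general e T hT
end

section
/- An operator A ∈ 𝒯₀ is compact if and only if lim_{n→∞} ⟨A e_n, e_n⟩ = 0; equivalently, if A = Σ_{n=0}^∞ β_n T_{n,n} (strong operator convergence, with Σ β_n convergent), then A is compact if and only if Σ_{n=0}^∞ β_n = 0. -/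
open scoped ComplexInnerProductSpace

/-!
Each `T_{n,n}` is diagonal in the basis `e`, being the projection onto the closed span of the `e_k`
with `k ≥ n`, and the diagonal operators form a norm-closed subspace, so every element of `𝒯₀` is
diagonal. An orthonormal family is weakly null by Bessel's inequality, hence a compact operator
sends it to a norm-null family. Conversely, the norm of a diagonal operator is the supremum of its
entries, so when the entries tend to zero the finite truncations, which have finite rank, converge
in norm. The diagonal entries of `Σ β_n T_{n,n}` are the partial sums of `Σ β_n`.
-/

open Filter Topology

section WeaklyNull

variable {𝕜 E F ι : Type*} [RCLike 𝕜] [NormedAddCommGroup F] [NormedSpace 𝕜 F]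

theorem tendsto_apply_zero_of_isCompactOperator_of_weaklyNull [NormedAddCommGroup E]
    [NormedSpace 𝕜 E] {A : E →L[𝕜] F} (hA : IsCompactOperator A) {l : Filter ι} {x : ι → E} {r : ℝ}
    (hbdd : ∀ᶠ i in l, ‖x i‖ ≤ r)
    (hweak : ∀ f : StrongDual 𝕜 E, Tendsto (fun i => f (x i)) l (𝓝 0)) :
    Tendsto (fun i => A (x i)) l (𝓝 0) := by
  obtain ⟨K, hK, hAK⟩ := hA.image_closedBall_subset_compact (f := (A : E →ₗ[𝕜] F)) r
  have hxK : ∀ᶠ i in l, A (x i) ∈ K :=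
    hbdd.mono fun i hi => hAK ⟨x i, mem_closedBall_zero_iff.mpr hi, rfl⟩
  refine hK.tendsto_nhds_of_unique_mapClusterPt hxK fun y _ hy => ?_
  refine SeparatingDual.eq_zero_of_forall_dual_eq_zero (R := 𝕜) fun f => ?_
  have hfy : MapClusterPt (f y) l fun i => f (A (x i)) :=
    hy.continuousAt_comp f.continuous.continuousAt
  have hfA : Tendsto (fun i => f (A (x i))) l (𝓝 0) := hweak (f ∘L A)
  exact eq_of_nhds_neBot (ClusterPt.mono hfy hfA)

variable [NormedAddCommGroup E] [InnerProductSpace 𝕜 E] [CompleteSpace E]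

theorem tendsto_dual_apply_cofinite_zero_of_orthonormal {v : ι → E} (hv : Orthonormal 𝕜 v)
    (f : StrongDual 𝕜 E) : Tendsto (fun i => f (v i)) cofinite (𝓝 0) := by
  obtain ⟨z, rfl⟩ := (InnerProductSpace.toDual 𝕜 E).surjective f
  have hsq : Tendsto (fun i => ‖inner 𝕜 (v i) z‖ ^ 2) cofinite (𝓝 0) :=
    (hv.inner_products_summable z).tendsto_cofinite_zero
  rw [tendsto_zero_iff_norm_tendsto_zero]
  simpa [norm_inner_symm z] using hsq.sqrt

theorem tendsto_apply_cofinite_zero_of_isCompactOperator_of_orthonormal {A : E →L[𝕜] F}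
    (hA : IsCompactOperator A) {v : ι → E} (hv : Orthonormal 𝕜 v) :
    Tendsto (fun i => A (v i)) cofinite (𝓝 0) :=
  tendsto_apply_zero_of_isCompactOperator_of_weaklyNull hA (.of_forall fun i => (hv.1 i).le)
    (tendsto_dual_apply_cofinite_zero_of_orthonormal hv)

end WeaklyNull

theorem hasSum_sq_norm_inner_hilbertBasis {𝕜 E ι : Type*} [RCLike 𝕜] [NormedAddCommGroup E]
    [InnerProductSpace 𝕜 E] (e : HilbertBasis ι 𝕜 E) (x : E) :
    HasSum (fun i => ‖inner 𝕜 (e i) x‖ ^ 2) (‖x‖ ^ 2) := by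
  simpa [e.repr_apply_apply] using lp.hasSum_norm (by simp) (e.repr x)

/-- The operators that are diagonal with respect to the family `v`: every `v i` is sent to a
multiple of itself. -/
def diagonalOperators (𝕜 : Type*) {E ι : Type*} [NontriviallyNormedField 𝕜]
    [NormedAddCommGroup E] [NormedSpace 𝕜 E] (v : ι → E) : Submodule 𝕜 (E →L[𝕜] E) where
  carrier := {A | ∀ i, A (v i) ∈ 𝕜 ∙ v i}
  zero_mem' _ := zero_mem _
  add_mem' hA hB i := add_mem (hA i) (hB i)
  smul_mem' c _ hA i := Submodule.smul_mem _ c (hA i)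

namespace diagonalOperators

variable {𝕜 E ι : Type*} [NormedAddCommGroup E]

theorem isClosed [NontriviallyNormedField 𝕜] [CompleteSpace 𝕜] [NormedSpace 𝕜 E] (v : ι → E) :
    IsClosed (diagonalOperators 𝕜 v : Set (E →L[𝕜] E)) := by
  have h_inter : (diagonalOperators 𝕜 v : Set (E →L[𝕜] E)) =
      ⋂ i, (fun A : E →L[𝕜] E => A (v i)) ⁻¹' (𝕜 ∙ v i) := by
    ext A
    simp [diagonalOperators]
  rw [h_inter]
  exact isClosed_iInter fun i =>
    (Submodule.closed_of_finiteDimensional (𝕜 ∙ v i)).preimage (by fun_prop)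

variable [RCLike 𝕜] [InnerProductSpace 𝕜 E] {A : E →L[𝕜] E}

section Orthonormal

variable {v : ι → E}

theorem apply_eq_inner_smul (hv : Orthonormal 𝕜 v) (hA : A ∈ diagonalOperators 𝕜 v) (i : ι) :
    A (v i) = inner 𝕜 (v i) (A (v i)) • v i := by
  obtain ⟨c, hc⟩ := Submodule.mem_span_singleton.mp (hA i)
  rw [← hc, inner_smul_right, inner_self_eq_one_of_norm_eq_one (hv.1 i), mul_one]

theorem norm_inner_apply (hv : Orthonormal 𝕜 v) (hA : A ∈ diagonalOperators 𝕜 v) (i : ι) :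
    ‖inner 𝕜 (v i) (A (v i))‖ = ‖A (v i)‖ := by
  conv_rhs => rw [apply_eq_inner_smul hv hA, norm_smul, hv.1, mul_one]

theorem rankOne_apply_mem (hv : Orthonormal 𝕜 v) (hA : A ∈ diagonalOperators 𝕜 v) (i : ι) :
    InnerProductSpace.rankOne 𝕜 (A (v i)) (v i) ∈ diagonalOperators 𝕜 v := by
  intro j
  rw [InnerProductSpace.rankOne_apply]
  rcases eq_or_ne i j with rfl | hij
  · exact Submodule.smul_mem _ _ (hA i)
  · simp [hv.2 hij]

end Orthonormal

section HilbertBasis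

variable (e : HilbertBasis ι 𝕜 E)

theorem inner_apply (hA : A ∈ diagonalOperators 𝕜 e) (i : ι) (x : E) :
    inner 𝕜 (e i) (A x) = inner 𝕜 (e i) (A (e i)) * inner 𝕜 (e i) x := by
  have h_ext : innerSL 𝕜 (e i) ∘L A = inner 𝕜 (e i) (A (e i)) • innerSL 𝕜 (e i) := by
    refine ContinuousLinearMap.ext_on
      ((Submodule.dense_iff_topologicalClosure_eq_top).mpr e.dense_span) ?_
    rintro _ ⟨j, rfl⟩
    rcases eq_or_ne i j with rfl | hij
    · simp [e.orthonormal.1]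
    · suffices inner 𝕜 (e i) (A (e j)) = 0 by simpa [e.orthonormal.2 hij]
      rw [apply_eq_inner_smul e.orthonormal hA, inner_smul_right, e.orthonormal.2 hij, mul_zero]
  exact DFunLike.congr_fun h_ext x

theorem opNorm_le (hA : A ∈ diagonalOperators 𝕜 e) {c : ℝ} (hc : 0 ≤ c)
    (h : ∀ i, ‖A (e i)‖ ≤ c) : ‖A‖ ≤ c := by
  refine A.opNorm_le_bound hc fun x => ?_
  suffices ‖A x‖ ^ 2 ≤ c ^ 2 * ‖x‖ ^ 2 by
    rwa [← mul_pow, sq_le_sq₀ (by positivity) (by positivity)] at this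
  refine hasSum_le (fun i => ?_) (hasSum_sq_norm_inner_hilbertBasis e (A x))
    ((hasSum_sq_norm_inner_hilbertBasis e x).mul_left (c ^ 2))
  rw [inner_apply e hA, norm_mul, mul_pow, norm_inner_apply e.orthonormal hA]
  gcongr
  exact h i

theorem hasSum_rankOne (hA : A ∈ diagonalOperators 𝕜 e)
    (h : Tendsto (fun i => A (e i)) cofinite (𝓝 0)) :
    HasSum (fun i => InnerProductSpace.rankOne 𝕜 (A (e i)) (e i)) A := by
  classical
  have h_sum_apply (s : Finset ι) (i : ι) :
      (∑ j ∈ s, InnerProductSpace.rankOne 𝕜 (A (e j)) (e j)) (e i) =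
        if i ∈ s then A (e i) else 0 := by
    simp [orthonormal_iff_ite.mp e.orthonormal, ite_smul]
  refine Metric.nhds_basis_closedBall.tendsto_right_iff.mpr fun ε hε => ?_
  have h_large : {i | ¬ ‖A (e i)‖ ≤ ε}.Finite := by
    simpa using h.eventually (Metric.closedBall_mem_nhds 0 hε)
  filter_upwards [eventually_ge_atTop h_large.toFinset] with s hs
  rw [mem_closedBall_iff_norm']
  refine opNorm_le e
    (sub_mem hA (sum_mem fun i _ => rankOne_apply_mem e.orthonormal hA i)) hε.le fun i => ?_
  rw [sub_apply, h_sum_apply]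
  split_ifs with hi
  · simpa using hε.le
  · rw [sub_zero]
    by_contra h_gt
    exact hi (hs (h_large.mem_toFinset.mpr h_gt))

variable [CompleteSpace E]

theorem isCompactOperator_iff_tendsto_apply (hA : A ∈ diagonalOperators 𝕜 e) :
    IsCompactOperator A ↔ Tendsto (fun i => A (e i)) cofinite (𝓝 0) := by
  refine ⟨fun h => tendsto_apply_cofinite_zero_of_isCompactOperator_of_orthonormal h e.orthonormal,
    fun h => isCompactOperator_of_tendsto (hasSum_rankOne e hA h) (.of_forall fun s => ?_)⟩
  refine Submodule.sum_mem (compactOperator (RingHom.id 𝕜) E E) fun i _ => ?_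
  exact (isCompactOperator_of_locallyCompactSpace_dom (innerSL 𝕜 (e i))).clm_comp
    (ContinuousLinearMap.toSpanSingleton 𝕜 (A (e i)))

theorem isCompactOperator_iff_tendsto_inner (hA : A ∈ diagonalOperators 𝕜 e) :
    IsCompactOperator A ↔ Tendsto (fun i => inner 𝕜 (e i) (A (e i))) cofinite (𝓝 0) := by
  rw [isCompactOperator_iff_tendsto_apply e hA, tendsto_zero_iff_norm_tendsto_zero,
    tendsto_zero_iff_norm_tendsto_zero (f := fun i => inner 𝕜 (e i) (A (e i)))]
  simp only [norm_inner_apply e.orthonormal hA]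

end HilbertBasis

end diagonalOperators

section Shift

variable {H : Type*} [NormedAddCommGroup H] [InnerProductSpace ℂ H] [CompleteSpace H]
  (e : HilbertBasis ℕ ℂ H) {T : H →L[ℂ] H}

theorem adjoint_shift_apply_zero (hT : ∀ n, T (e n) = e (n + 1)) :
    ContinuousLinearMap.adjoint T (e 0) = 0 := by
  apply e.repr.injective
  ext j
  simp [e.repr_apply_apply, ContinuousLinearMap.adjoint_inner_right, hT,
    e.orthonormal.inner_eq_zero (Nat.succ_ne_zero j)]

theorem adjoint_shift_apply_succ (hT : ∀ n, T (e n) = e (n + 1)) (k : ℕ) :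
    ContinuousLinearMap.adjoint T (e (k + 1)) = e k := by
  apply e.repr.injective
  ext j
  simp [e.repr_apply_apply, ContinuousLinearMap.adjoint_inner_right, hT,
    orthonormal_iff_ite.mp e.orthonormal]

theorem Tnm_succ_succ (T : H →L[ℂ] H) (n m : ℕ) :
    Tnm T (n + 1) (m + 1) = T * Tnm T n m * ContinuousLinearMap.adjoint T := by
  simp only [Tnm, pow_succ' T, pow_succ (ContinuousLinearMap.adjoint T), mul_assoc]

theorem Tnm_self_apply (hT : ∀ n, T (e n) = e (n + 1)) (n k : ℕ) :
    Tnm T n n (e k) = if n ≤ k then e k else 0 := by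
  induction n generalizing k with
  | zero => simp [Tnm]
  | succ n ih =>
    rw [Tnm_succ_succ, mul_apply_eq_comp, mul_apply_eq_comp]
    cases k with
    | zero => simp [adjoint_shift_apply_zero e hT]
    | succ k => simp [adjoint_shift_apply_succ e hT, ih, apply_ite T, hT]

theorem mem_diagonalOperators_of_mem_closure_span_Tnm (hT : ∀ n, T (e n) = e (n + 1))
    {A : H →L[ℂ] H}
    (hA : A ∈ (Submodule.span ℂ
      {B : H →L[ℂ] H | ∃ n : ℕ, B = Tnm T n n}).topologicalClosure) :
    A ∈ diagonalOperators ℂ e := by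
  refine Submodule.topologicalClosure_minimal _ (Submodule.span_le.mpr ?_)
    (diagonalOperators.isClosed e) hA
  rintro _ ⟨n, rfl⟩ k
  rw [Tnm_self_apply e hT]
  split_ifs
  · exact Submodule.mem_span_singleton_self (e k)
  · exact zero_mem _

theorem sum_smul_Tnm_self_apply (hT : ∀ n, T (e n) = e (n + 1)) (β : ℕ → ℂ) (N k : ℕ) :
    (∑ n ∈ Finset.range N, β n • Tnm T n n) (e k) =
      (∑ n ∈ Finset.range (min N (k + 1)), β n) • e k := by
  have h_filter : {n ∈ Finset.range N | n ≤ k} = Finset.range (min N (k + 1)) := by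
    ext n
    simp only [Finset.mem_filter, Finset.mem_range]
    lia
  simp only [sum_apply, smul_apply, Tnm_self_apply e hT, smul_ite, smul_zero,
    ← Finset.sum_filter, h_filter, Finset.sum_smul]

theorem apply_eq_sum_smul_of_tendsto_sum_smul_Tnm (hT : ∀ n, T (e n) = e (n + 1)) {β : ℕ → ℂ}
    {k : ℕ} {x : H}
    (h : Tendsto (fun N => (∑ n ∈ Finset.range N, β n • Tnm T n n) (e k)) atTop (𝓝 x)) :
    x = (∑ n ∈ Finset.range (k + 1), β n) • e k := by
  refine tendsto_nhds_unique h (tendsto_const_nhds.congr' ?_)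
  filter_upwards [eventually_ge_atTop (k + 1)] with N hN
  rw [sum_smul_Tnm_self_apply e hT, min_eq_right hN]

end Shift

theorem T0_compact_iff_general {H : Type*} [NormedAddCommGroup H] [InnerProductSpace ℂ H]
    [CompleteSpace H] (e : HilbertBasis ℕ ℂ H) {T : H →L[ℂ] H} (hT : ∀ n, T (e n) = e (n + 1))
    {A : H →L[ℂ] H} (hA : A ∈ diagonalOperators ℂ e) :
    (IsCompactOperator A ↔ Tendsto (fun n => ⟪e n, A (e n)⟫) atTop (𝓝 0)) ∧
      ∀ β : ℕ → ℂ,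
        (∀ x, Tendsto (fun N => (∑ n ∈ Finset.range N, β n • Tnm T n n) x) atTop (𝓝 (A x))) →
        (IsCompactOperator A ↔ Tendsto (fun N => ∑ n ∈ Finset.range N, β n) atTop (𝓝 0)) := by
  have h_compact : IsCompactOperator A ↔ Tendsto (fun n => ⟪e n, A (e n)⟫) atTop (𝓝 0) := by
    rw [diagonalOperators.isCompactOperator_iff_tendsto_inner e hA, Nat.cofinite_eq_atTop]
  refine ⟨h_compact, fun β hβ => ?_⟩
  have h_entry (k : ℕ) : ⟪e k, A (e k)⟫ = ∑ n ∈ Finset.range (k + 1), β n := by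
    rw [apply_eq_sum_smul_of_tendsto_sum_smul_Tnm e hT (hβ (e k)), inner_smul_right,
      inner_self_eq_one_of_norm_eq_one (e.orthonormal.1 k), mul_one]
  simp only [h_compact, h_entry]
  exact tendsto_add_atTop_iff_nat (f := fun N => ∑ n ∈ Finset.range N, β n) 1

/-- `A ∈ 𝒯₀` is compact iff its diagonal tends to zero; equivalently, if
`A = Σ β_n T_{n,n}` (strong operator convergence, `Σ β_n` convergent), then `A` is compact
iff `Σ_{n} β_n = 0`. -/
theorem T0_compact_iff {H : Type*} [NormedAddCommGroup H]
    [InnerProductSpace ℂ H] [CompleteSpace H] (e : HilbertBasis ℕ ℂ H) (T : H →L[ℂ] H)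
    (hT : ∀ n : ℕ, T (e n) = e (n + 1)) :
    ∀ A ∈ (Submodule.span ℂ
        {B : H →L[ℂ] H | ∃ n : ℕ, B = Tnm T n n}).topologicalClosure,
      (IsCompactOperator (⇑A) ↔
        Filter.Tendsto (fun n : ℕ => ⟪e n, A (e n)⟫) Filter.atTop (nhds 0)) ∧
      (∀ β : ℕ → ℂ,
        (∀ x : H, Filter.Tendsto
          (fun N : ℕ => (∑ n ∈ Finset.range N, β n • Tnm T n n) x)
          Filter.atTop (nhds (A x))) →
        (∃ s : ℂ, Filter.Tendsto (fun N : ℕ => ∑ n ∈ Finset.range N, β n)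
          Filter.atTop (nhds s)) →
        (IsCompactOperator (⇑A) ↔
          Filter.Tendsto (fun N : ℕ => ∑ n ∈ Finset.range N, β n) Filter.atTop (nhds 0))) :=
  fun _ hA =>
  have h := T0_compact_iff_general e hT (mem_diagonalOperators_of_mem_closure_span_Tnm e hT hA)
  ⟨h.1, fun β hβ _ => h.2 β hβ⟩
end

section
/- An operator A ∈ 𝒯 is compact if and only if all diagonals of its matrix tend to zero: for every j ∈ ℤ, the matrix entries ⟨A e_n, e_{n+j}⟩ (defined for n ∈ ℕ with n + j ≥ 0) tend to 0 as n → ∞. -/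
open scoped ComplexInnerProductSpace

/-! An operator `A` in the Toeplitz algebra commutes with the shift `T` modulo compact operators,
because `T` and `T*` do; as `T* T = 1`, it follows that `A - (T*)ⁿ A Tⁿ` is compact for every `n`.
The compressions `(T*)ⁿ A Tⁿ` converge in norm, and the `(i, j)` entry of `(T*)ⁿ A Tⁿ` is the
`(i + n, j + n)` entry of `A`. Hence if the diagonals of `A` tend to zero, all entries
of the limit vanish, so the limit is `0` and `A` is a norm limit of compact operators. Conversely,
compact operators send orthonormal sequences to null sequences. -/

open Filter Topology
open scoped NNReal

section CauchySeq

variable {X Y ι : Type*} [PseudoMetricSpace X] [PseudoMetricSpace Y] [Nonempty ι]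
  [SemilatticeSup ι]

lemma isClosed_setOf_cauchySeq_of_lipschitzWith {K : ℝ≥0} {F : ι → X → Y}
    (hF : ∀ i, LipschitzWith K (F i)) : IsClosed {x | CauchySeq fun i => F i x} := by
  simp_rw [cauchySeq_iff_tendsto_dist_atTop_0]
  have hdist (p : ι × ι) : LipschitzWith (2 * max K K) fun x => dist (F p.1 x) (F p.2 x) :=
    LipschitzWith.dist.comp ((hF p.1).prodMk (hF p.2))
  exact (LipschitzWith.uniformEquicontinuous _ _ hdist).equicontinuous.isClosed_setOfPred_tendsto
    continuous_const

end CauchySeq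

section Isometry

variable {𝔸 : Type*} [NormedRing 𝔸] [StarRing 𝔸] {v : 𝔸}

lemma cauchySeq_star_pow_mul_self_mul_mul_pow (hv : star v * v = 1) {b : 𝔸}
    (hb : CauchySeq fun n : ℕ => star v ^ n * b * v ^ n) :
    CauchySeq fun n : ℕ => star v ^ n * (v * b) * v ^ n := by
  have hsucc (n : ℕ) : star v ^ (n + 1) * (v * b) * v ^ (n + 1) =
      star v ^ n * b * v ^ n * v := calc
    _ = star v ^ n * (star v * v) * b * v ^ (n + 1) := by simp only [pow_succ, mul_assoc]
    _ = star v ^ n * b * v ^ n * v := by simp only [hv, mul_one, pow_succ, mul_assoc]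
  rw [← cauchySeq_shift 1]
  simp_rw [hsucc]
  exact (uniformContinuous_mul_right' v).comp_cauchySeq hb

lemma cauchySeq_star_pow_mul_star_mul_mul_pow {b : 𝔸}
    (hb : CauchySeq fun n : ℕ => star v ^ n * b * v ^ n) :
    CauchySeq fun n : ℕ => star v ^ n * (star v * b) * v ^ n := by
  have hcomm (n : ℕ) : star v ^ n * (star v * b) * v ^ n = star v * (star v ^ n * b * v ^ n) := by
    rw [← mul_assoc, ← pow_succ, pow_succ']
    simp only [mul_assoc]
  simp_rw [hcomm]
  exact (uniformContinuous_mul_left' (star v)).comp_cauchySeq hb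

variable [CStarRing 𝔸]

lemma norm_le_one_of_star_mul_self_eq_one (hv : star v * v = 1) : ‖v‖ ≤ 1 := by
  rcases subsingleton_or_nontrivial 𝔸 with _ | _
  · simp [Subsingleton.elim v 0]
  · have hsq : ‖v‖ * ‖v‖ = 1 := by rw [← CStarRing.norm_star_mul_self, hv, CStarRing.norm_one]
    nlinarith

lemma lipschitzWith_star_mul_mul (hv : ‖v‖ ≤ 1) : LipschitzWith 1 fun a => star v * a * v := by
  refine LipschitzWith.mk_one fun a b => ?_
  calc dist (star v * a * v) (star v * b * v)
      = ‖star v * (a - b) * v‖ := by rw [dist_eq_norm, mul_sub, sub_mul]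
    _ ≤ ‖star v‖ * ‖a - b‖ * ‖v‖ := norm_mul₃_le
    _ ≤ 1 * ‖a - b‖ * 1 := by rw [norm_star]; gcongr
    _ = dist a b := by rw [one_mul, mul_one, dist_eq_norm]

lemma isClosed_setOf_cauchySeq_star_pow_mul_mul_pow (hv : star v * v = 1) :
    IsClosed {a | CauchySeq fun n : ℕ => star v ^ n * a * v ^ n} := by
  simp_rw [← star_pow]
  refine isClosed_setOf_cauchySeq_of_lipschitzWith fun n => lipschitzWith_star_mul_mul ?_
  exact norm_le_one_of_star_mul_self_eq_one (by rw [star_pow, pow_mul_pow_eq_one n hv])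

variable {R : Type*} [CommSemiring R] [StarRing R] [Algebra R 𝔸] [StarModule R 𝔸]

-- The elements with Cauchy compressions need not form an algebra, but they are stable under left
-- multiplication by `v` and `star v`, hence by the closed algebra these generate.
lemma cauchySeq_star_pow_mul_mul_pow (hv : star v * v = 1) {a : 𝔸}
    (ha : a ∈ StarAlgebra.elemental R v) : CauchySeq fun n : ℕ => star v ^ n * a * v ^ n := by
  suffices h : ∀ b, (CauchySeq fun n : ℕ => star v ^ n * b * v ^ n) →
      CauchySeq fun n : ℕ => star v ^ n * (a * b) * v ^ n by
    simpa [pow_mul_pow_eq_one _ hv, cauchySeq_const] using h 1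
  induction ha using StarAlgebra.elemental.induction_on with
  | self => exact fun b hb => cauchySeq_star_pow_mul_self_mul_mul_pow hv hb
  | star_self => exact fun b hb => cauchySeq_star_pow_mul_star_mul_mul_pow hb
  | algebraMap r =>
    intro b hb
    simp_rw [← mul_assoc, ← Algebra.commutes r, mul_assoc (algebraMap R 𝔸 r)]
    exact (uniformContinuous_mul_left' (algebraMap R 𝔸 r)).comp_cauchySeq hb
  | add x _ y _ hx hy =>
    intro b hb
    simp_rw [add_mul, mul_add, add_mul]
    exact (hx b hb).add (hy b hb)
  | mul x _ y _ hx hy =>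
    intro b hb
    simp_rw [mul_assoc x]
    exact hx _ (hy b hb)
  | closure s _ hs x hx =>
    intro b hb
    have hmaps : Set.MapsTo (· * b) s {a | CauchySeq fun n : ℕ => star v ^ n * a * v ^ n} :=
      fun y hy => hs y hy b hb
    exact (isClosed_setOf_cauchySeq_star_pow_mul_mul_pow hv).closure_subset
      (hmaps.closure (continuous_mul_const b) hx)

end Isometry

section Ideal

variable {𝔸 R : Type*} [Ring 𝔸] [StarRing 𝔸] [TopologicalSpace 𝔸] [IsTopologicalRing 𝔸]
  [ContinuousStar 𝔸] [CommSemiring R] [StarRing R] [Algebra R 𝔸] [StarModule R 𝔸]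
  {J : Ideal 𝔸} [J.IsTwoSided] {v a : 𝔸}

lemma commute_mk_of_mem_elemental (hJ : IsClosed (J : Set 𝔸))
    (hv : v * star v - star v * v ∈ J) (ha : a ∈ StarAlgebra.elemental R v) :
    Commute (Ideal.Quotient.mk J v) (Ideal.Quotient.mk J a) := by
  have hmem (b : 𝔸) : Commute (Ideal.Quotient.mk J v) (Ideal.Quotient.mk J b) ↔
      v * b - b * v ∈ J := by
    rw [commute_iff_eq, ← map_mul, ← map_mul, Ideal.Quotient.eq]
  have hclosed : IsClosed {b | v * b - b * v ∈ J} := hJ.preimage (by fun_prop)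
  induction ha using StarAlgebra.elemental.induction_on with
  | self => exact .refl _
  | star_self => exact (hmem _).mpr hv
  | algebraMap r => exact (Algebra.commute_algebraMap_right r v).map (Ideal.Quotient.mk J)
  | add b _ c _ hb hc => rw [map_add]; exact hb.add_right hc
  | mul b _ c _ hb hc => rw [map_mul]; exact hb.mul_right hc
  | closure s _ hs b hb =>
    exact (hmem b).mpr (closure_minimal (fun c hc => (hmem c).mp (hs c hc)) hclosed hb)

lemma sub_star_pow_mul_mul_pow_mem (hJ : IsClosed (J : Set 𝔸)) (hv : star v * v = 1)
    (hvJ : 1 - v * star v ∈ J) (ha : a ∈ StarAlgebra.elemental R v) (n : ℕ) :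
    a - star v ^ n * a * v ^ n ∈ J := by
  have hcomm : Commute (Ideal.Quotient.mk J v) (Ideal.Quotient.mk J a) :=
    commute_mk_of_mem_elemental hJ (by rwa [hv, ← neg_mem_iff, neg_sub]) ha
  rw [← Ideal.Quotient.eq, mul_assoc, map_mul, map_mul, map_pow (Ideal.Quotient.mk J) v,
    ← (hcomm.pow_left n).eq, ← map_pow, ← map_mul, ← map_mul, ← mul_assoc,
    pow_mul_pow_eq_one n hv, one_mul]

end Ideal

section CompactOperatorIdeal

/-- The two-sided ideal of compact operators in the ring of continuous endomorphisms of `E`. -/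
def compactOperatorIdeal (R E : Type*) [Semiring R] [AddCommMonoid E] [TopologicalSpace E]
    [ContinuousAdd E] [Module R E] : Ideal (E →L[R] E) where
  carrier := {A | IsCompactOperator A}
  zero_mem' := isCompactOperator_zero
  add_mem' := IsCompactOperator.add
  smul_mem' B _ hA := hA.clm_comp B

instance compactOperatorIdeal_isTwoSided {R E : Type*} [Semiring R] [AddCommMonoid E]
    [TopologicalSpace E] [ContinuousAdd E] [Module R E] : (compactOperatorIdeal R E).IsTwoSided :=
  ⟨fun B hA => hA.comp_clm B⟩

lemma isClosed_compactOperatorIdeal {𝕜 E : Type*} [NontriviallyNormedField 𝕜]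
    [NormedAddCommGroup E] [NormedSpace 𝕜 E] [CompleteSpace E] :
    IsClosed (compactOperatorIdeal 𝕜 E : Set (E →L[𝕜] E)) :=
  isClosed_setOfPred_isCompactOperator

end CompactOperatorIdeal

section Hilbert

variable {𝕜 E F ι : Type*} [RCLike 𝕜] [NormedAddCommGroup E] [InnerProductSpace 𝕜 E]
  [NormedAddCommGroup F] [NormedSpace 𝕜 F]

lemma tendsto_inner_cofinite_of_orthonormal {v : ι → E} (hv : Orthonormal 𝕜 v) (x : E) :
    Tendsto (fun i => inner 𝕜 x (v i)) cofinite (𝓝 0) := by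
  rw [tendsto_zero_iff_norm_tendsto_zero]
  simpa [Real.sqrt_sq, norm_inner_symm] using
    (hv.inner_products_summable x).tendsto_cofinite_zero.sqrt

lemma tendsto_cofinite_of_isCompactOperator_of_orthonormal [CompleteSpace E] {A : E →L[𝕜] F}
    (hA : IsCompactOperator A) {v : ι → E} (hv : Orthonormal 𝕜 v) :
    Tendsto (fun i => A (v i)) cofinite (𝓝 0) := by
  have hK : IsCompact (closure (A '' Metric.closedBall 0 1)) :=
    hA.isCompact_closure_image_closedBall (f := (A : E →ₗ[𝕜] F)) 1
  refine hK.tendsto_nhds_of_unique_mapClusterPt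
    (.of_forall fun i => subset_closure ⟨v i, by simp [hv.1 i], rfl⟩) fun y _ hy => ?_
  refine SeparatingDual.eq_zero_of_forall_dual_eq_zero (R := 𝕜) fun f => ?_
  have hweak : Tendsto (fun i => f (A (v i))) cofinite (𝓝 0) := by
    simpa using
      tendsto_inner_cofinite_of_orthonormal hv ((InnerProductSpace.toDual 𝕜 E).symm (f ∘L A))
  have hcluster : MapClusterPt (f y) cofinite fun i => f (A (v i)) :=
    hy.continuousAt_comp f.continuous.continuousAt
  exact eq_of_nhds_neBot (ClusterPt.mono hcluster hweak)

lemma isCompactOperator_rankOne (x : F) (y : E) :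
    IsCompactOperator (InnerProductSpace.rankOne 𝕜 x y) :=
  (isCompactOperator_of_locallyCompactSpace_rng (.toSpanSingleton 𝕜 x)).comp_clm (innerSL 𝕜 y)

variable {G : Type*} [TopologicalSpace G] [AddCommMonoid G] [Module 𝕜 G] [T2Space G]

lemma hilbertBasis_clm_ext (e : HilbertBasis ι 𝕜 E) {A B : E →L[𝕜] G}
    (h : ∀ i, A (e i) = B (e i)) : A = B :=
  ContinuousLinearMap.ext_on (Submodule.dense_iff_topologicalClosure_eq_top.mpr e.dense_span)
    (Set.forall_mem_range.mpr h)

lemma hilbertBasis_ext_inner_left (e : HilbertBasis ι 𝕜 E) {x y : E}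
    (h : ∀ i, inner 𝕜 (e i) x = inner 𝕜 (e i) y) : x = y :=
  e.repr.injective (lp.ext (funext fun i => by simpa only [e.repr_apply_apply] using h i))

end Hilbert

section Shift

variable {𝕜 H : Type*} [RCLike 𝕜] [NormedAddCommGroup H] [InnerProductSpace 𝕜 H]
  {e : HilbertBasis ℕ 𝕜 H} {T : H →L[𝕜] H}

lemma shift_pow_apply (hT : ∀ n, T (e n) = e (n + 1)) (n k : ℕ) : (T ^ n) (e k) = e (k + n) := by
  induction n with
  | zero => simp
  | succ n ih => rw [pow_succ', mul_apply_eq_comp, ih, hT, add_assoc]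

variable [CompleteSpace H]

lemma star_shift_apply_zero (hT : ∀ n, T (e n) = e (n + 1)) : star T (e 0) = 0 := by
  refine hilbertBasis_ext_inner_left e fun i => ?_
  rw [ContinuousLinearMap.star_eq_adjoint, ContinuousLinearMap.adjoint_inner_right, hT,
    e.orthonormal.inner_eq_zero i.succ_ne_zero, inner_zero_right]

lemma star_shift_apply_succ (hT : ∀ n, T (e n) = e (n + 1)) (n : ℕ) :
    star T (e (n + 1)) = e n := by
  refine hilbertBasis_ext_inner_left e fun i => ?_
  rw [ContinuousLinearMap.star_eq_adjoint, ContinuousLinearMap.adjoint_inner_right, hT]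
  simp only [orthonormal_iff_ite.mp e.orthonormal, add_left_inj]

lemma star_shift_mul_shift (hT : ∀ n, T (e n) = e (n + 1)) : star T * T = 1 :=
  hilbertBasis_clm_ext e fun n => by
    rw [mul_apply_eq_comp, hT, star_shift_apply_succ hT, one_apply_eq_self]

lemma one_sub_shift_mul_star_shift_eq_rankOne (hT : ∀ n, T (e n) = e (n + 1)) :
    1 - T * star T = InnerProductSpace.rankOne 𝕜 (e 0) (e 0) := by
  refine hilbertBasis_clm_ext e fun n => ?_
  cases n with
  | zero => simp [star_shift_apply_zero hT, e.orthonormal.1 0]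
  | succ n => simp [star_shift_apply_succ hT, hT, e.orthonormal.inner_eq_zero]

lemma one_sub_shift_mul_star_shift_mem_compactOperatorIdeal (hT : ∀ n, T (e n) = e (n + 1)) :
    1 - T * star T ∈ compactOperatorIdeal 𝕜 H := by
  rw [one_sub_shift_mul_star_shift_eq_rankOne hT]
  exact isCompactOperator_rankOne (e 0) (e 0)

lemma inner_star_shift_pow_mul_mul_shift_pow (hT : ∀ n, T (e n) = e (n + 1)) (A : H →L[𝕜] H)
    (n i j : ℕ) : inner 𝕜 (e i) ((star T ^ n * A * T ^ n) (e j)) =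
      inner 𝕜 (e (i + n)) (A (e (j + n))) := by
  rw [mul_apply_eq_comp, mul_apply_eq_comp, ← star_pow, ContinuousLinearMap.star_eq_adjoint,
    ContinuousLinearMap.adjoint_inner_right, shift_pow_apply hT, shift_pow_apply hT]

lemma isCompactOperator_of_tendsto_diagonals (hT : ∀ n, T (e n) = e (n + 1)) {A : H →L[𝕜] H}
    (hA : A ∈ StarAlgebra.elemental 𝕜 T)
    (hdiag : ∀ i j, Tendsto (fun n => inner 𝕜 (e (i + n)) (A (e (j + n)))) atTop (𝓝 0)) :
    IsCompactOperator A := by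
  have hcompact (n : ℕ) : A - star T ^ n * A * T ^ n ∈ compactOperatorIdeal 𝕜 H := by
    refine sub_star_pow_mul_mul_pow_mem (R := 𝕜) ?_ ?_ ?_ hA n
    · exact isClosed_compactOperatorIdeal
    · exact star_shift_mul_shift hT
    · exact one_sub_shift_mul_star_shift_mem_compactOperatorIdeal hT
  have hcauchy : CauchySeq fun n : ℕ => star T ^ n * A * T ^ n := by
    refine cauchySeq_star_pow_mul_mul_pow (R := 𝕜) ?_ hA
    exact star_shift_mul_shift hT
  obtain ⟨B, hB⟩ := cauchySeq_tendsto_of_complete hcauchy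
  have hB_zero : B = 0 := by
    refine hilbertBasis_clm_ext e fun j => hilbertBasis_ext_inner_left e fun i => ?_
    have hentry : Tendsto (fun n => inner 𝕜 (e i) ((star T ^ n * A * T ^ n) (e j))) atTop
        (𝓝 (inner 𝕜 (e i) (B (e j)))) :=
      tendsto_const_nhds.inner
        (((ContinuousLinearMap.apply 𝕜 H (e j)).continuous.tendsto B).comp hB)
    simp_rw [inner_star_shift_pow_mul_mul_shift_pow hT] at hentry
    rw [tendsto_nhds_unique hentry (hdiag i j), zero_apply, inner_zero_right]
  have hlim : Tendsto (fun n => A - star T ^ n * A * T ^ n) atTop (𝓝 A) := by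
    simpa only [hB_zero, sub_zero] using tendsto_const_nhds.sub hB
  exact isClosed_compactOperatorIdeal.mem_of_tendsto hlim (.of_forall hcompact)

theorem toeplitz_compact_iff_diagonals_general (e : HilbertBasis ℕ 𝕜 H) (T : H →L[𝕜] H)
    (hT : ∀ n, T (e n) = e (n + 1)) (A : H →L[𝕜] H) (hA : A ∈ StarAlgebra.elemental 𝕜 T) :
    IsCompactOperator A ↔
      ∀ j : ℤ, Tendsto (fun n : ℕ => inner 𝕜 (e ((n : ℤ) + j).toNat) (A (e n))) atTop (𝓝 0) := by
  constructor
  · intro hcompact j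
    have hnull : Tendsto (fun n => A (e n)) atTop (𝓝 0) := by
      simpa only [Nat.cofinite_eq_atTop] using
        tendsto_cofinite_of_isCompactOperator_of_orthonormal hcompact e.orthonormal
    refine squeeze_zero_norm (fun n => ?_) (tendsto_zero_iff_norm_tendsto_zero.mp hnull)
    simpa only [e.orthonormal.1, one_mul] using
      norm_inner_le_norm (𝕜 := 𝕜) (e ((n : ℤ) + j).toNat) (A (e n))
  · intro hdiag
    refine isCompactOperator_of_tendsto_diagonals hT hA fun i j => ?_
    have hindex (n : ℕ) : (((n + j : ℕ) : ℤ) + ((i : ℤ) - j)).toNat = i + n := by lia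
    refine ((hdiag (i - j)).comp (tendsto_add_atTop_nat j)).congr fun n => ?_
    rw [Function.comp_apply, hindex, add_comm n j]

end Shift

/-- `A ∈ 𝒯` is compact iff every diagonal of its matrix tends to zero:
for each `j ∈ ℤ` the entries `⟨A e_n, e_{n+j}⟩` tend to `0` as `n → ∞`. -/
theorem toeplitz_compact_iff_diagonals {H : Type*} [NormedAddCommGroup H]
    [InnerProductSpace ℂ H] [CompleteSpace H] (e : HilbertBasis ℕ ℂ H) (T : H →L[ℂ] H)
    (hT : ∀ n : ℕ, T (e n) = e (n + 1))
    (A : H →L[ℂ] H) (hA : A ∈ ToeplitzAlg T) :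
    IsCompactOperator (⇑A) ↔
      ∀ j : ℤ, Filter.Tendsto (fun n : ℕ => ⟪e (((n : ℤ) + j).toNat), A (e n)⟫)
        Filter.atTop (nhds 0) :=
  toeplitz_compact_iff_diagonals_general e T hT A hA
end

section
/- If n, m, k, l ∈ ℕ satisfy m − n = l − k (as integers), then the operator T_{n,m} − T_{k,l} is compact. -/
/-! Modulo the compact operators the unilateral shift `T` is unitary: `T* T = 1`, and `1 - T T*` is
the projection onto the line spanned by `e 0`. The class of `Tⁿ (T*)ᵐ` modulo the compact operators
therefore depends only on `m - n`. Concretely, compactness of `1 - T T*` passes to `1 - Tʲ (T*)ʲ`,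
and `Tⁿ (T*)ᵐ - Tⁿ⁺ʲ (T*)ᵐ⁺ʲ = Tⁿ (1 - Tʲ (T*)ʲ) (T*)ᵐ`. -/

open ContinuousLinearMap InnerProductSpace

section CompactDefect

variable {R M : Type*} [Ring R] [AddCommGroup M] [Module R M] [TopologicalSpace M]
  [IsTopologicalAddGroup M] {A B : M →L[R] M}

theorem isCompactOperator_one_sub_pow_mul_pow (h : IsCompactOperator (1 - A * B : M →L[R] M))
    (j : ℕ) : IsCompactOperator (1 - A ^ j * B ^ j : M →L[R] M) := by
  induction j with
  | zero => simpa using isCompactOperator_zero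
  | succ j ih =>
    have telescope : 1 - A ^ (j + 1) * B ^ (j + 1) =
        (1 - A ^ j * B ^ j) + A ^ j * ((1 - A * B) * B ^ j) := by
      rw [pow_succ A, pow_succ' B]
      noncomm_ring
    rw [telescope]
    exact ih.add ((h.comp_clm (B ^ j)).clm_comp (A ^ j))

theorem isCompactOperator_pow_mul_pow_sub_pow_add_mul_pow_add
    (h : IsCompactOperator (1 - A * B : M →L[R] M)) (n m j : ℕ) :
    IsCompactOperator (A ^ n * B ^ m - A ^ (n + j) * B ^ (m + j) : M →L[R] M) := by
  have factor : A ^ n * B ^ m - A ^ (n + j) * B ^ (m + j) =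
      A ^ n * ((1 - A ^ j * B ^ j) * B ^ m) := by
    rw [pow_add A, add_comm m, pow_add B]
    noncomm_ring
  rw [factor]
  exact ((isCompactOperator_one_sub_pow_mul_pow h j).comp_clm (B ^ m)).clm_comp (A ^ n)

end CompactDefect

theorem isCompactOperator_rankOne_s11 {𝕜 E F : Type*} [RCLike 𝕜] [SeminormedAddCommGroup E]
    [NormedSpace 𝕜 E] [SeminormedAddCommGroup F] [InnerProductSpace 𝕜 F] (x : E) (y : F) :
    IsCompactOperator (rankOne 𝕜 x y) :=
  (isCompactOperator_of_locallyCompactSpace_dom (innerSL 𝕜 y)).clm_comp (toSpanSingleton 𝕜 x)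

section BasisShift

variable {𝕜 E F ι κ : Type*} [RCLike 𝕜] [NormedAddCommGroup E] [InnerProductSpace 𝕜 E]
  [CompleteSpace E] [NormedAddCommGroup F] [InnerProductSpace 𝕜 F] [CompleteSpace F]
  {e : HilbertBasis ι 𝕜 E} {f : HilbertBasis κ 𝕜 F} {T : E →L[𝕜] F} {σ : ι → κ}

theorem adjoint_apply_basis_of_notMem_range (hT : ∀ i, T (e i) = f (σ i)) {j : κ}
    (hj : j ∉ Set.range σ) : adjoint T (f j) = 0 := by
  refine e.repr.injective (lp.ext (funext fun i => ?_))
  have hij : σ i ≠ j := fun h => hj ⟨i, h⟩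
  simp [e.repr_apply_apply, adjoint_inner_right, hT, f.orthonormal.inner_eq_zero hij]

theorem adjoint_apply_basis_of_injective (hT : ∀ i, T (e i) = f (σ i))
    (hσ : Function.Injective σ) (i : ι) : adjoint T (f (σ i)) = e i := by
  classical
  refine e.repr.injective (lp.ext (funext fun i' => ?_))
  simp only [e.repr_apply_apply, adjoint_inner_right, hT, orthonormal_iff_ite.mp e.orthonormal,
    orthonormal_iff_ite.mp f.orthonormal, hσ.eq_iff]

theorem one_sub_comp_adjoint_eq_sum_rankOne (hT : ∀ i, T (e i) = f (σ i))
    (hσ : Function.Injective σ) (hfin : (Set.range σ)ᶜ.Finite) :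
    1 - T ∘L adjoint T = ∑ j ∈ hfin.toFinset, rankOne 𝕜 (f j) (f j) := by
  classical
  refine ContinuousLinearMap.ext_on
    (Submodule.dense_iff_topologicalClosure_eq_top.mpr f.dense_span) ?_
  rintro _ ⟨j, rfl⟩
  have sum_apply_basis : (∑ j' ∈ hfin.toFinset, rankOne 𝕜 (f j') (f j')) (f j) =
      if j ∉ Set.range σ then f j else 0 := by
    simp [sum_apply, orthonormal_iff_ite.mp f.orthonormal]
  rw [sum_apply_basis]
  by_cases hj : j ∈ Set.range σ
  · obtain ⟨i, rfl⟩ := hj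
    simp [adjoint_apply_basis_of_injective hT hσ, hT]
  · simp [adjoint_apply_basis_of_notMem_range hT hj, hj]

theorem isCompactOperator_one_sub_comp_adjoint_of_finite_compl_range
    (hT : ∀ i, T (e i) = f (σ i)) (hσ : Function.Injective σ) (hfin : (Set.range σ)ᶜ.Finite) :
    IsCompactOperator (1 - T ∘L adjoint T : F →L[𝕜] F) := by
  rw [one_sub_comp_adjoint_eq_sum_rankOne hT hσ hfin]
  exact (compactOperator (RingHom.id 𝕜) F F).sum_mem fun j _ =>
    isCompactOperator_rankOne_s11 (f j) (f j)

end BasisShift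

theorem Tnm_sub_Tkl_compact_general {H : Type*} [NormedAddCommGroup H]
    [InnerProductSpace ℂ H] [CompleteSpace H] (T : H →L[ℂ] H)
    (hT : IsCompactOperator (1 - T * adjoint T : H →L[ℂ] H))
    (n m k l : ℕ) (h : (m : ℤ) - (n : ℤ) = (l : ℤ) - (k : ℤ)) :
    IsCompactOperator (⇑(Tnm T n m - Tnm T k l)) := by
  wlog hnk : n ≤ k generalizing n m k l
  · rw [← neg_sub]
    exact (this k l n m h.symm (le_of_not_ge hnk)).neg
  obtain ⟨j, rfl⟩ := Nat.exists_eq_add_of_le hnk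
  obtain rfl : l = m + j := by omega
  exact isCompactOperator_pow_mul_pow_sub_pow_add_mul_pow_add hT n m j

/-- if `m - n = l - k` in `ℤ`, then `T_{n,m} - T_{k,l}` is compact. -/
theorem Tnm_sub_Tkl_compact {H : Type*} [NormedAddCommGroup H]
    [InnerProductSpace ℂ H] [CompleteSpace H] (e : HilbertBasis ℕ ℂ H) (T : H →L[ℂ] H)
    (hT : ∀ n : ℕ, T (e n) = e (n + 1))
    (n m k l : ℕ) (h : (m : ℤ) - (n : ℤ) = (l : ℤ) - (k : ℤ)) :
    IsCompactOperator (⇑(Tnm T n m - Tnm T k l)) := by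
  have finite_compl_range : (Set.range Nat.succ)ᶜ.Finite := by
    simp [Nat.range_succ, Set.compl_ofPred]
  exact Tnm_sub_Tkl_compact_general T
    (isCompactOperator_one_sub_comp_adjoint_of_finite_compl_range hT Nat.succ_injective
      finite_compl_range) n m k l h
end

section
/- There exists a continuous linear functional ε on 𝒯 of norm 1 which is a unital multiplicative star-homomorphism 𝒯 → ℂ and satisfies ε(T_{n,m}) = 1 for all n, m ∈ ℕ (in particular ε(T) = 1). -/
/-!
An isometry `a` in a C⋆-algebra and a scalar `c` such that `a - c` has no left inverse give a
character of `C⋆(a)` with `a ↦ c`. The left ideal generated by `a - c` is proper, hence not dense,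
so Hahn–Banach yields a functional `f` with `f 1 = 1` that vanishes on it, i.e. `f (b a) = c f b`
for all `b`. Since `a⋆ a = 1`, also `c f (b a⋆) = f (b a⋆ a) = f b`. Thus `f` turns right
multiplication by `a` and by `a⋆` into multiplication by `c` and by `c⁻¹`, so by continuity it is
multiplicative on all of `C⋆(a)`. A character of a C⋆-algebra automatically preserves `⋆`.

For the shift `T` and `c = 1`: `T - 1` maps the vector `e₀ + ⋯ + e_{N-1}`, of norm `√N`, to
`e_N - e₀`, of norm at most `2`, so it has no bounded left inverse.
-/

open ContinuousLinearMap

section HahnBanach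

variable {𝕜 : Type*} [RCLike 𝕜]

lemma exists_strongDual_eq_one_of_notMem {E : Type*} [NormedAddCommGroup E] [NormedSpace 𝕜 E]
    {p : Submodule 𝕜 E} (hp : IsClosed (p : Set E)) {x : E} (hx : x ∉ p) :
    ∃ f : StrongDual 𝕜 E, f x = 1 ∧ ∀ y ∈ p, f y = 0 := by
  have hx' : p.mkQ x ≠ 0 := by simpa using hx
  obtain ⟨g, hg⟩ := SeparatingDual.exists_eq_one (R := 𝕜) hx'
  exact ⟨g.comp p.mkQL, hg, fun y hy => by
    simp [(Submodule.Quotient.mk_eq_zero p).2 hy]⟩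

lemma exists_strongDual_map_one_of_ne_top {A : Type*} [NormedRing A] [NormedAlgebra 𝕜 A]
    [CompleteSpace A] {I : Ideal A} (hI : I ≠ ⊤) :
    ∃ f : StrongDual 𝕜 A, f 1 = 1 ∧ ∀ x ∈ I, f x = 0 := by
  have h1 : (1 : A) ∉ I.closure.restrictScalars 𝕜 :=
    (Ideal.ne_top_iff_one _).1 (I.closure_ne_top hI)
  obtain ⟨f, hf1, hf⟩ := exists_strongDual_eq_one_of_notMem isClosed_closure h1
  exact ⟨f, hf1, fun x hx => hf x (subset_closure hx)⟩

end HahnBanach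

section RightMultiplicativeDomain

variable {𝕜 A : Type*} [NormedField 𝕜] [NormedRing A] [NormedAlgebra 𝕜 A]

/-- The right multiplicative domain of a unital functional `f`: the elements `a` such that
`f (b * a) = f b * f a` for all `b`. As it is a closed subalgebra, multiplicativity of `f` on a
topologically generated subalgebra can be checked on the generators. -/
def rightMultiplicativeDomain (f : StrongDual 𝕜 A) (hf : f 1 = 1) : Subalgebra 𝕜 A where
  carrier := {a | ∀ b, f (b * a) = f b * f a}
  mul_mem' {a a'} ha ha' b := by rw [← mul_assoc, ha', ha, ha' a, mul_assoc]
  add_mem' {a a'} ha ha' b := by rw [mul_add, map_add, map_add, ha, ha', mul_add]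
  algebraMap_mem' c b := by
    simp [Algebra.algebraMap_eq_smul_one, hf, mul_comm]

lemma isClosed_rightMultiplicativeDomain (f : StrongDual 𝕜 A) (hf : f 1 = 1) :
    IsClosed (rightMultiplicativeDomain f hf : Set A) := by
  change IsClosed {a | ∀ b, f (b * a) = f b * f a}
  simp only [Set.ofPred_forall]
  exact isClosed_iInter fun b => isClosed_eq (by fun_prop) (by fun_prop)

end RightMultiplicativeDomain

section Character

lemma elemental_toSubalgebra_le {R A : Type*} [CommSemiring R] [StarRing R] [TopologicalSpace A]
    [Semiring A] [StarRing A] [IsTopologicalSemiring A] [ContinuousStar A] [Algebra R A]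
    [StarModule R A] {S : Subalgebra R A} (hS : IsClosed (S : Set A)) {a : A} (ha : a ∈ S)
    (ha' : star a ∈ S) : (StarAlgebra.elemental R a).toSubalgebra ≤ S := by
  refine closure_minimal (?_ : (StarAlgebra.adjoin R {a}).toSubalgebra ≤ S) hS
  rw [StarAlgebra.adjoin_toSubalgebra, Algebra.adjoin_le_iff]
  simp [Set.star_singleton, Set.insert_subset_iff, ha, ha']

variable {A : Type*} [CStarAlgebra A]

lemma exists_starAlgHom_elemental_apply_eq {a : A} (ha : star a * a = 1) {c : ℂ}
    (hc : Ideal.span {a - algebraMap ℂ A c} ≠ ⊤) :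
    ∃ φ : StarAlgebra.elemental ℂ a →⋆ₐ[ℂ] ℂ,
      φ ⟨a, StarAlgebra.elemental.self_mem ℂ a⟩ = c := by
  obtain ⟨f, hf1, hf⟩ := exists_strongDual_map_one_of_ne_top (𝕜 := ℂ) hc
  have hmul_a (b : A) : f (b * a) = f b * c := by
    have := hf _ (Ideal.mul_mem_left _ b (Ideal.mem_span_singleton_self _))
    rwa [mul_sub, map_sub, ← Algebra.commutes, ← Algebra.smul_def, map_smul, smul_eq_mul,
      sub_eq_zero, mul_comm c] at this
  have hmul_star (b : A) : f (b * star a) * c = f b := by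
    rw [← hmul_a, mul_assoc, ha, mul_one]
  have hfa : f a = c := by simpa [hf1] using hmul_a 1
  have hfstar : f (star a) * c = 1 := by simpa [hf1] using hmul_star 1
  have hle : (StarAlgebra.elemental ℂ a).toSubalgebra ≤ rightMultiplicativeDomain f hf1 := by
    refine elemental_toSubalgebra_le (isClosed_rightMultiplicativeDomain f hf1)
      (fun b => by rw [hmul_a, hfa]) fun b => ?_
    rw [← hmul_star b, mul_assoc, mul_comm c, hfstar, mul_one]
  let φ : StarAlgebra.elemental ℂ a →ₐ[ℂ] ℂ :=
    AlgHom.ofLinearMap (f.toLinearMap ∘ₗ (StarAlgebra.elemental ℂ a).toSubalgebra.val.toLinearMap)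
      hf1 fun x y => hle y.2 x
  exact ⟨{ φ with map_star' := map_star φ }, hfa⟩

end Character

section Shift

variable {𝕜 E ι : Type*} [RCLike 𝕜] [NormedAddCommGroup E] [InnerProductSpace 𝕜 E]

lemma norm_sum_sq_of_orthonormal {v : ι → E} (hv : Orthonormal 𝕜 v) (s : Finset ι) :
    ‖∑ i ∈ s, v i‖ ^ 2 = s.card := by
  have h := hv.inner_sum (fun _ => 1) (fun _ => 1) s
  rw [← RCLike.ofReal_inj (K := 𝕜)]
  simpa [inner_self_eq_norm_sq_to_K] using h

lemma span_shift_sub_one_ne_top {v : ℕ → E} (hv : Orthonormal 𝕜 v) {T : E →L[𝕜] E}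
    (hT : ∀ n, T (v n) = v (n + 1)) : Ideal.span {T - 1} ≠ ⊤ := by
  intro htop
  obtain ⟨S, hS⟩ := Ideal.mem_span_singleton'.1 ((Ideal.eq_top_iff_one _).1 htop)
  have hsum (N : ℕ) : ∑ i ∈ Finset.range N, v i = S (v N - v 0) := by
    have htele : (T - 1) (∑ i ∈ Finset.range N, v i) = v N - v 0 := by
      simp [hT, ← Finset.sum_range_sub v N]
    rw [← htele, ← mul_apply_eq_comp, hS, one_apply_eq_self]
  have hbound (N : ℕ) : (N : ℝ) ≤ (‖S‖ * 2) ^ 2 := by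
    have hdiff : ‖v N - v 0‖ ≤ 2 := by
      simpa [hv.norm_eq_one, one_add_one_eq_two] using norm_sub_le (v N) (v 0)
    calc (N : ℝ) = ‖S (v N - v 0)‖ ^ 2 := by
          rw [← hsum, norm_sum_sq_of_orthonormal hv, Finset.card_range]
      _ ≤ (‖S‖ * 2) ^ 2 := by gcongr; exact S.le_opNorm_of_le hdiff
  obtain ⟨N, hN⟩ := exists_nat_gt ((‖S‖ * 2) ^ 2)
  exact (hbound N).not_gt hN

lemma adjoint_comp_self_of_orthonormal_comp [CompleteSpace E] {F : Type*} [NormedAddCommGroup F]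
    [InnerProductSpace 𝕜 F] [CompleteSpace F] (b : HilbertBasis ι 𝕜 E) {T : E →L[𝕜] F}
    (hT : Orthonormal 𝕜 (T ∘ b)) : adjoint T ∘L T = 1 := by
  classical
  refine ext_on (Submodule.dense_iff_topologicalClosure_eq_top.2 b.dense_span) ?_
  rintro _ ⟨i, rfl⟩
  refine b.repr.injective (lp.ext (funext fun j => ?_))
  have hij := orthonormal_iff_ite.1 hT j i
  simpa [b.repr_apply_apply, adjoint_inner_right, orthonormal_iff_ite.1 b.orthonormal] using hij

end Shift

/-- there is a norm-one continuous linear functional `ε` on `𝒯` which is a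
unital multiplicative star-homomorphism into `ℂ` with `ε(T_{n,m}) = 1` for all `n, m`. -/
theorem exists_counit {H : Type*} [NormedAddCommGroup H]
    [InnerProductSpace ℂ H] [CompleteSpace H] (e : HilbertBasis ℕ ℂ H) (T : H →L[ℂ] H)
    (hT : ∀ n : ℕ, T (e n) = e (n + 1)) :
    ∃ ε : (ToeplitzAlg T) →L[ℂ] ℂ, ‖ε‖ = 1 ∧ ε 1 = 1 ∧
      (∀ a b : ToeplitzAlg T, ε (a * b) = ε a * ε b) ∧
      (∀ a : ToeplitzAlg T, ε (star a) = star (ε a)) ∧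
      (∀ (n m : ℕ) (hnm : Tnm T n m ∈ ToeplitzAlg T), ε ⟨Tnm T n m, hnm⟩ = 1) := by
  have hiso : star T * T = 1 := adjoint_comp_self_of_orthonormal_comp e <| by
    simpa only [Function.comp_def, hT] using e.orthonormal.comp _ Nat.succ_injective
  obtain ⟨φ, hφ⟩ := exists_starAlgHom_elemental_apply_eq (c := 1) hiso <| by
    simpa using span_shift_sub_one_ne_top e.orthonormal hT
  have : Nontrivial H := ⟨e 0, 0, e.orthonormal.ne_zero 0⟩
  refine ⟨φ.toAlgHom.toContinuousLinearMap, φ.toAlgHom.toContinuousLinearMap_norm,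
    map_one φ, map_mul φ, map_star φ, fun n m hnm => ?_⟩
  let t : StarAlgebra.elemental ℂ T := ⟨T, StarAlgebra.elemental.self_mem ℂ T⟩
  calc φ ⟨Tnm T n m, hnm⟩ = φ (t ^ n * star t ^ m) := rfl
    _ = 1 := by rw [map_mul, map_pow, map_pow, map_star, hφ]; simp
end
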